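/- arXiv:1201.2922 — 7 statements merged into one kernel-verified Lean document; each statement's English description precedes it below -/
import Mathlib

section
/- Let n ≥ 1 and let d_0 ≤ d_1 ≤ ... ≤ d_n be positive integers. The Waring rank over ℂ of the monomial F = x_0^{d_0} x_1^{d_1} ⋯ x_n^{d_n} equals (d_1+1)(d_2+1)⋯(d_n+1); that is, the least number r such that F can be written as a sum of r d-th powers of linear forms (d = d_0 + ⋯ + d_n) is (d_1+1)⋯(d_n+1). -/
open MvPolynomial

/-!
Comparing coefficients, `∏ x_i ^ d_i = ∑_j ℓ_j ^ |d|` says exactly that the power sums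
`∑_j ℓ_j ^ m`, over exponents `m` with `|m| = |d|`, vanish for `m ≠ d` and equal
`1 / multinomial(d)` for `m = d` (`monomial_eq_sum_pow_iff`). Both bounds are about these sums,
and both use the box `waringBox d` of exponents `b` with `b_0 = 0` and `b_i ≤ d_i`, whose
cardinality is `∏_{i ≥ 1} (d_i + 1)`.

*Upper bound.* Let `ω_i` be a primitive `(d_i + 1)`-th root of unity. The forms
`∑_i ω_i ^ k_i x_i`, for `k` in the box, with weights proportional to `∏_i ω_i ^ k_i`, have power
sums that factor into geometric sums. The `m`-th one is nonzero only if `d_i + 1 ∣ m_i + 1` for all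
`i ≥ 1`; since `d_0 ≤ d_i` and `|m| = |d|`, this forces `m = d`. The weights are absorbed into the
forms by taking `|d|`-th roots.

*Lower bound.* With fewer forms than elements of the box, there is a nonzero `g = ∑_b c_b y ^ b`,
supported in the box, that vanishes at all the points `ℓ_j / ℓ_{j0}` with `ℓ_{j0} ≠ 0`. Let `a` be
an exponent of maximal degree in `g`, and let `G` be the homogenization of `g` with respect to
`y_0`. As `d_0 > 0`, the form `y ^ (d - a) G` also vanishes at the `ℓ_j` with `ℓ_{j0} = 0`.
It has degree `|d|`, and its coefficient at `y ^ d` is `c_a`. Summing its values over all `ℓ_j`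
gives `0 = c_a / multinomial(d)`, a contradiction. This is an explicit form of the apolarity
argument of Carlini, Catalisano and Geramita.
-/

/-- The exponents `b` with `b 0 = 0` and `b i ≤ d i` for `i ≠ 0`. -/
def waringBox {n : ℕ} (d : Fin (n + 1) → ℕ) : Finset (Fin (n + 1) → ℕ) :=
  Fintype.piFinset fun i => if i = 0 then {0} else Finset.range (d i + 1)

lemma mem_waringBox {n : ℕ} {d b : Fin (n + 1) → ℕ} :
    b ∈ waringBox d ↔ b 0 = 0 ∧ ∀ i, i ≠ 0 → b i ≤ d i := by
  rw [waringBox, Fintype.mem_piFinset]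
  constructor
  · intro h
    refine ⟨by simpa using h 0, fun i hi => ?_⟩
    have := h i
    rw [if_neg hi, Finset.mem_range] at this
    omega
  · rintro ⟨h0, h⟩ i
    by_cases hi : i = 0
    · subst hi; simpa using h0
    · rw [if_neg hi, Finset.mem_range]
      have := h i hi
      omega

lemma card_waringBox {n : ℕ} (d : Fin (n + 1) → ℕ) :
    (waringBox d).card = ∏ i ∈ Finset.univ.erase 0, (d i + 1) := by
  rw [waringBox, Fintype.card_piFinset, ← Finset.mul_prod_erase _ _ (Finset.mem_univ 0)]
  simp only [if_true, Finset.card_singleton, one_mul]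
  refine Finset.prod_congr rfl fun i hi => ?_
  rw [if_neg (Finset.ne_of_mem_erase hi), Finset.card_range]

lemma coeff_linearForm_pow {N : ℕ} (a : Fin N → ℂ) (D : ℕ) (m : Fin N →₀ ℕ) :
    coeff m ((∑ i, C (a i) * X i : MvPolynomial (Fin N) ℂ) ^ D)
      = if ∑ i, m i = D then (Nat.multinomial Finset.univ m : ℂ) * ∏ i, a i ^ m i else 0 := by
  classical
  rw [Finset.sum_pow_eq_sum_piAntidiag, coeff_sum]
  have key : ∀ k : Fin N → ℕ,
      coeff m ((Nat.multinomial Finset.univ k : MvPolynomial (Fin N) ℂ)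
        * ∏ i, (C (a i) * X i) ^ k i)
      = if k = m then (Nat.multinomial Finset.univ k : ℂ) * ∏ i, a i ^ k i else 0 := by
    intro k
    have h : (Nat.multinomial Finset.univ k : MvPolynomial (Fin N) ℂ)
        * ∏ i, (C (a i) * X i) ^ k i
        = monomial (Finsupp.equivFunOnFinite.symm k)
            ((Nat.multinomial Finset.univ k : ℂ) * ∏ i, a i ^ k i) := by
      rw [monomial_eq, Finsupp.prod_fintype _ _ (by simp)]
      simp [mul_pow, Finset.prod_mul_distrib, mul_assoc]
    rw [h, coeff_monomial]
    refine if_congr ?_ rfl rfl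
    rw [Equiv.symm_apply_eq]
    rfl
  simp_rw [key]
  rw [Finset.sum_ite_eq']
  simp

lemma coeff_prod_X_pow {N : ℕ} (d : Fin N → ℕ) (m : Fin N →₀ ℕ) :
    coeff m (∏ i, X i ^ d i : MvPolynomial (Fin N) ℂ) = if d = m then 1 else 0 := by
  have h : (∏ i, X i ^ d i : MvPolynomial (Fin N) ℂ)
      = monomial (Finsupp.equivFunOnFinite.symm d) 1 := by
    rw [monomial_eq, Finsupp.prod_fintype _ _ (by simp)]
    simp
  classical
  rw [h, coeff_monomial]
  refine if_congr ?_ rfl rfl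
  rw [Equiv.symm_apply_eq]
  rfl

/-- A Waring decomposition of a monomial is a system of equations on the power sums of the
coefficient vectors of the linear forms. -/
lemma monomial_eq_sum_pow_iff {N : ℕ} {ι : Type*} [Fintype ι] (d : Fin N → ℕ)
    (ℓ : ι → Fin N → ℂ) :
    (∏ i, X i ^ d i : MvPolynomial (Fin N) ℂ) = ∑ j, (∑ i, C (ℓ j i) * X i) ^ (∑ i, d i)
      ↔ ∀ m : Fin N → ℕ, ∑ i, m i = ∑ i, d i →
          (Nat.multinomial Finset.univ m : ℂ) * ∑ j, ∏ i, ℓ j i ^ m i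
            = if d = m then 1 else 0 := by
  rw [MvPolynomial.ext_iff]
  simp_rw [coeff_sum, coeff_linearForm_pow, coeff_prod_X_pow]
  constructor
  · intro h m hm
    have := h (Finsupp.equivFunOnFinite.symm m)
    simp only [Finsupp.equivFunOnFinite_symm_apply_apply, Finsupp.coe_equivFunOnFinite_symm,
      hm, if_true] at this
    rw [Finset.mul_sum]
    exact this.symm
  · intro h m
    by_cases hm : ∑ i, m i = ∑ i, d i
    · simp only [hm, if_true]
      rw [← h m hm, Finset.mul_sum]
    · have hd : d ≠ m := by
        rintro rfl
        exact hm rfl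
      simp [hm, hd]

/-- The orthogonality relation for roots of unity, with exponents shifted by one. -/
lemma sum_primitiveRoot_pow {ω : ℂ} {q : ℕ} (hω : IsPrimitiveRoot ω (q + 1)) (e : ℕ) :
    ∑ k ∈ Finset.range (q + 1), (ω ^ k) ^ (e + 1)
      = if q + 1 ∣ e + 1 then ((q : ℂ) + 1) else 0 := by
  have h1 : ∀ k, (ω ^ k) ^ (e + 1) = (ω ^ (e + 1)) ^ k := fun k => by
    rw [← pow_mul, ← pow_mul, mul_comm]
  simp_rw [h1]
  split_ifs with h
  · rw [(hω.pow_eq_one_iff_dvd _).2 h]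
    simp
  · have hne : ω ^ (e + 1) ≠ 1 := fun h' => h ((hω.pow_eq_one_iff_dvd _).1 h')
    rw [geom_sum_eq hne, ← pow_mul, mul_comm, pow_mul, hω.pow_eq_one]
    simp

/-- Among exponents of degree `|d|`, only `d` itself satisfies all the congruences
`m i ≡ d i` modulo `d i + 1` for `i ≠ 0`. -/
lemma eq_of_dvd {n : ℕ} {d m : Fin (n + 1) → ℕ} (hd : ∀ i, d 0 ≤ d i)
    (hm : ∑ i, m i = ∑ i, d i) (h : ∀ i, i ≠ 0 → d i + 1 ∣ m i + 1) : d = m := by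
  have hge : ∀ i ∈ Finset.univ.erase (0 : Fin (n + 1)), d i ≤ m i := fun i hi => by
    have := Nat.le_of_dvd (by omega) (h i (Finset.ne_of_mem_erase hi))
    omega
  have hm' : m 0 + ∑ i ∈ Finset.univ.erase 0, m i = d 0 + ∑ i ∈ Finset.univ.erase 0, d i := by
    rw [Finset.add_sum_erase _ _ (Finset.mem_univ _), Finset.add_sum_erase _ _ (Finset.mem_univ _),
      hm]
  have heq : ∀ i, i ≠ 0 → m i = d i := by
    intro i hi
    have hi' : i ∈ Finset.univ.erase (0 : Fin (n + 1)) := by simp [hi]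
    rw [← Finset.add_sum_erase _ m hi', ← Finset.add_sum_erase _ d hi'] at hm'
    have hle : ∑ j ∈ (Finset.univ.erase (0 : Fin (n + 1))).erase i, d j
        ≤ ∑ j ∈ (Finset.univ.erase (0 : Fin (n + 1))).erase i, m j :=
      Finset.sum_le_sum fun j hj => hge j (Finset.mem_of_mem_erase hj)
    have h0 := hd i
    obtain ⟨c, hc⟩ := h i hi
    -- The quotient is `1`: a quotient `≥ 2` gives `m i ≥ 2 * d i + 1 > d 0 + d i`.
    have hc2 : c < 2 := by
      by_contra! hc2
      have := Nat.mul_le_mul_left (d i + 1) hc2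
      omega
    interval_cases c <;> omega
  have hs : ∑ i ∈ Finset.univ.erase 0, m i = ∑ i ∈ Finset.univ.erase 0, d i :=
    Finset.sum_congr rfl fun i hi => heq i (Finset.ne_of_mem_erase hi)
  ext i
  by_cases hi : i = 0
  · subst hi; omega
  · exact (heq i hi).symm

/-- The decomposition of the monomial into powers of forms with root-of-unity coefficients. -/
lemma exists_decomposition {n : ℕ} {d : Fin (n + 1) → ℕ} (hd : ∀ i, d 0 ≤ d i) (hpos : 0 < d 0) :
    ∃ ℓ : waringBox d → (Fin (n + 1) → ℂ),
      (∏ i, X i ^ d i : MvPolynomial (Fin (n + 1)) ℂ)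
        = ∑ j, (∑ i, C (ℓ j i) * X i) ^ (∑ i, d i) := by
  have hD : 0 < ∑ i, d i := hpos.trans_le (Finset.single_le_sum_of_canonicallyOrdered
    (f := d) (Finset.mem_univ 0))
  let ω : Fin (n + 1) → ℂ := fun i => Complex.exp (2 * Real.pi * Complex.I / ((d i + 1 : ℕ) : ℂ))
  have hω : ∀ i, IsPrimitiveRoot (ω i) (d i + 1) := fun i =>
    Complex.isPrimitiveRoot_exp _ (Nat.succ_ne_zero _)
  let M : ℂ := Nat.multinomial Finset.univ d * ∏ i ∈ Finset.univ.erase 0, ((d i : ℂ) + 1)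
  have hM : M ≠ 0 := by
    refine mul_ne_zero (Nat.cast_ne_zero.2 (Nat.multinomial_pos _ _).ne') ?_
    exact Finset.prod_ne_zero_iff.2 fun i _ => Nat.cast_add_one_ne_zero _
  choose u hu using fun k : Fin (n + 1) → ℕ =>
    IsAlgClosed.exists_pow_nat_eq (M⁻¹ * ∏ i, ω i ^ k i) hD
  refine ⟨fun k i => u k * ω i ^ (k : Fin (n + 1) → ℕ) i, ?_⟩
  rw [monomial_eq_sum_pow_iff]
  intro m hm
  have hsum : ∑ k : waringBox d, ∏ i, (u k * ω i ^ (k : Fin (n + 1) → ℕ) i) ^ m i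
      = M⁻¹ * ∏ i ∈ Finset.univ.erase 0, if d i + 1 ∣ m i + 1 then ((d i : ℂ) + 1) else 0 := by
    rw [Finset.sum_coe_sort (waringBox d) fun k => ∏ i, (u k * ω i ^ k i) ^ m i]
    have h1 : ∀ k : Fin (n + 1) → ℕ,
        ∏ i, (u k * ω i ^ k i) ^ m i = M⁻¹ * ∏ i, (ω i ^ k i) ^ (m i + 1) := by
      intro k
      simp_rw [mul_pow (u k), pow_succ, Finset.prod_mul_distrib]
      rw [Finset.prod_pow_eq_pow_sum, hm, hu]
      ring
    simp_rw [h1]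
    rw [← Finset.mul_sum, waringBox, ← Finset.prod_univ_sum _ fun i k => (ω i ^ k) ^ (m i + 1),
      ← Finset.mul_prod_erase _ _ (Finset.mem_univ 0)]
    congr 1
    simp only [if_true, Finset.sum_singleton, pow_zero, one_pow, one_mul]
    refine Finset.prod_congr rfl fun i hi => ?_
    rw [if_neg (Finset.ne_of_mem_erase hi), sum_primitiveRoot_pow (hω i)]
  rw [hsum]
  split_ifs with h
  · subst h
    simp only [dvd_refl, if_true]
    rw [mul_left_comm]
    exact inv_mul_cancel₀ hM
  · obtain ⟨i, hi, hdvd⟩ : ∃ i, i ≠ 0 ∧ ¬ d i + 1 ∣ m i + 1 := by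
      by_contra! h'
      exact h (eq_of_dvd hd hm h')
    rw [Finset.prod_eq_zero (i := i) (by simp [hi]) (if_neg hdvd), mul_zero, mul_zero]

/-- Apolarity bound; it holds for any variable `x_0` occurring in the monomial, whether or not its
exponent is minimal. -/
lemma card_waringBox_le {n r : ℕ} {d : Fin (n + 1) → ℕ} (hpos : 0 < d 0)
    (ℓ : Fin r → (Fin (n + 1) → ℂ))
    (h : (∏ i, X i ^ d i : MvPolynomial (Fin (n + 1)) ℂ)
      = ∑ j, (∑ i, C (ℓ j i) * X i) ^ (∑ i, d i)) :
    (waringBox d).card ≤ r := by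
  rw [monomial_eq_sum_pow_iff] at h
  by_contra! hr
  -- The rows with `ℓ j 0 = 0` hold junk values of the division and are never used.
  let A : Matrix (Fin r) (waringBox d) ℂ :=
    Matrix.of fun j b => ∏ i, (ℓ j i / ℓ j 0) ^ (b : Fin (n + 1) → ℕ) i
  obtain ⟨c, hcA, hc0⟩ : ∃ c : waringBox d → ℂ, A.mulVecLin c = 0 ∧ c ≠ 0 := by
    have hker := LinearMap.ker_ne_bot_of_finrank_lt (f := A.mulVecLin) (by simpa using hr)
    obtain ⟨c, hc, hc0⟩ := (Submodule.ne_bot_iff _).1 hker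
    exact ⟨c, hc, hc0⟩
  obtain ⟨b₀, hb₀⟩ := Function.ne_iff.1 hc0
  obtain ⟨a, ha, hmax⟩ := Finset.exists_max_image
    (Finset.univ.filter fun b : waringBox d => c b ≠ 0)
    (fun b => ∑ i, (b : Fin (n + 1) → ℕ) i) ⟨b₀, by simpa using hb₀⟩
  simp only [Finset.mem_filter, Finset.mem_univ, true_and] at ha hmax
  obtain ⟨ha0, had⟩ := mem_waringBox.1 a.2
  have had' : ∀ i, a.1 i ≤ d i := fun i => by
    by_cases hi : i = 0
    · subst hi; omega
    · exact had i hi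
  -- The exponents of the form `y ^ (d - a) G`, where `G` is the homogenization of `∑ c_b y ^ b`.
  let m : waringBox d → Fin (n + 1) → ℕ := fun b i =>
    b.1 i + (d i - a.1 i) + if i = 0 then ∑ i, a.1 i - ∑ i, b.1 i else 0
  have hm : ∀ b, c b ≠ 0 → ∑ i, m b i = ∑ i, d i := by
    intro b hb
    have h1 := hmax b hb
    have h2 : ∑ i, (d i - a.1 i) + ∑ i, a.1 i = ∑ i, d i := by
      rw [← Finset.sum_add_distrib]
      exact Finset.sum_congr rfl fun i _ => Nat.sub_add_cancel (had' i)
    simp only [m, Finset.sum_add_distrib, Finset.sum_ite_eq', Finset.mem_univ, if_true]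
    omega
  have hmd : ∀ b, d = m b ↔ b = a := by
    intro b
    constructor
    · intro hb
      ext i
      by_cases hi : i = 0
      · subst hi
        rw [(mem_waringBox.1 b.2).1, ha0]
      · have h1 := congrFun hb i
        have h2 := had' i
        simp only [m, if_neg hi] at h1
        omega
    · rintro rfl
      ext i
      have h2 := had' i
      simp only [m, Nat.sub_self, ite_self]
      omega
  have hvanish : ∀ j, ∑ b, c b * ∏ i, ℓ j i ^ m b i = 0 := by
    intro j
    by_cases hj : ℓ j 0 = 0
    · refine Finset.sum_eq_zero fun b _ => ?_
      rw [Finset.prod_eq_zero (Finset.mem_univ 0), mul_zero]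
      rw [hj, zero_pow]
      simp only [m]
      omega
    · have hrow : ∑ b, c b * ∏ i, (ℓ j i / ℓ j 0) ^ b.1 i = 0 := by
        have := congrFun hcA j
        simp only [Matrix.mulVecLin_apply, Matrix.mulVec, dotProduct, A, Matrix.of_apply,
          Pi.zero_apply] at this
        rw [← this]
        exact Finset.sum_congr rfl fun b _ => mul_comm _ _
      have hterm : ∀ b, c b * ∏ i, ℓ j i ^ m b i
          = (c b * ∏ i, (ℓ j i / ℓ j 0) ^ b.1 i)
            * ((∏ i, ℓ j i ^ (d i - a.1 i)) * ℓ j 0 ^ ∑ i, a.1 i) := by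
        intro b
        by_cases hb : c b = 0
        · simp [hb]
        have h1 := hmax b hb
        have h2 : ∏ i, ℓ j i ^ m b i = (∏ i, ℓ j i ^ b.1 i) * (∏ i, ℓ j i ^ (d i - a.1 i))
            * ℓ j 0 ^ (∑ i, a.1 i - ∑ i, b.1 i) := by
          simp only [m, pow_add, Finset.prod_mul_distrib]
          congr 1
          rw [Finset.prod_eq_single 0 (fun i _ hi => by simp [hi]) (by simp)]
          simp
        have h3 : ∏ i, (ℓ j i / ℓ j 0) ^ b.1 i
            = (∏ i, ℓ j i ^ b.1 i) / ℓ j 0 ^ ∑ i, b.1 i := by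
          simp_rw [div_pow]
          rw [Finset.prod_div_distrib, Finset.prod_pow_eq_pow_sum]
        rw [h2, h3, pow_sub₀ _ hj h1]
        field_simp
      simp_rw [hterm]
      rw [← Finset.sum_mul, hrow, zero_mul]
  have hmom : ∀ b, b ≠ a → c b * ∑ j, ∏ i, ℓ j i ^ m b i = 0 := by
    intro b hba
    by_cases hb : c b = 0
    · rw [hb, zero_mul]
    have := h (m b) (hm b hb)
    rw [if_neg (mt (hmd b).1 hba)] at this
    rw [(mul_eq_zero.1 this).resolve_left (Nat.cast_ne_zero.2 (Nat.multinomial_pos _ _).ne'),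
      mul_zero]
  have htotal : ∑ b, c b * ∑ j, ∏ i, ℓ j i ^ m b i = 0 := by
    simp_rw [Finset.mul_sum]
    rw [Finset.sum_comm]
    exact Finset.sum_eq_zero fun j _ => hvanish j
  rw [Finset.sum_eq_single a (fun b _ hb => hmom b hb) (by simp)] at htotal
  have hda := h (m a) (hm a ha)
  rw [if_pos ((hmd a).2 rfl), (mul_eq_zero.1 htotal).resolve_left ha, mul_zero] at hda
  exact zero_ne_one hda

/-- The Waring rank of the monomial `x_0^{d_0} ⋯ x_n^{d_n}` with
`0 < d_0 ≤ d_1 ≤ ⋯ ≤ d_n` equals `(d_1+1)⋯(d_n+1)`: this number is the least `r`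
such that the monomial is a sum of `r` `d`-th powers of linear forms, `d = d_0 + ⋯ + d_n`. -/
theorem waring_rank_of_monomial (n : ℕ) (hn : 1 ≤ n)
    (d : Fin (n + 1) → ℕ) (hmono : Monotone d) (hpos : 0 < d 0) :
    IsLeast {r : ℕ | ∃ ℓ : Fin r → (Fin (n + 1) → ℂ),
        (∏ i, X i ^ d i : MvPolynomial (Fin (n + 1)) ℂ)
          = ∑ j, (∑ i, C (ℓ j i) * X i) ^ (∑ i, d i)}
      (∏ i ∈ Finset.univ.erase 0, (d i + 1)) := by
  rw [← card_waringBox]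
  constructor
  · obtain ⟨ℓ, hℓ⟩ := exists_decomposition (fun i => hmono (Fin.zero_le i)) hpos
    refine ⟨fun j => ℓ ((waringBox d).equivFin.symm j), ?_⟩
    rw [hℓ]
    exact ((waringBox d).equivFin.symm.sum_comp
      fun k => (∑ i, C (ℓ k i) * X i : MvPolynomial (Fin (n + 1)) ℂ) ^ (∑ i, d i)).symm
  · rintro r ⟨ℓ, hℓ⟩
    exact card_waringBox_le hpos ℓ hℓ
end

section
/- Let k be a field, n ≥ 1, and 0 < d_0 ≤ d_1 ≤ ⋯ ≤ d_n integers with d = d_0 + ⋯ + d_n. Suppose for each i = 1,…,n there exists a primitive (d_i+1)-th root of unity ζ_i ∈ k, and that C = (d! / (d_0! d_1! ⋯ d_n!)) · (d_1+1)(d_2+1)⋯(d_n+1) is invertible in k. Then in k[x_0,…,x_n] one has the identity x_0^{d_0} x_1^{d_1} ⋯ x_n^{d_n} = (1/C) · Σ (x_0 + ζ_1^{a_1} x_1 + ⋯ + ζ_n^{a_n} x_n)^d · (ζ_1^{a_1} ⋯ ζ_n^{a_n}), where the sum runs over all tuples (a_1,…,a_n) with 0 ≤ a_i ≤ d_i for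 each i. -/
/-!
Expand each power by the multinomial theorem. The coefficient of the monomial `x^e`, with
`∑ e_i = ∑ d_i`, in the sum over `a` is the multinomial coefficient of `e` times
`∏_{i ≥ 1} ∑_{a_i} ζ_i ^ (a_i * (e_i + 1))`. Each factor is a sum of powers of a
`(d_i + 1)`-st root of unity (`sum_primitiveRoot_pow`): it is `d_i + 1` when
`d_i + 1 ∣ e_i + 1` and `0` otherwise. If all these divisibilities hold, then `e_i ≥ d_i` for
`i ≥ 1`, and a strict inequality would force `e_i ≥ 2 d_i + 1 > d_i + d_0`, making the total degree
too big; so `e = d` (`eq_of_dvd_succ`) is the only exponent that survives.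
-/

open MvPolynomial

/-- Orthogonality of the characters `a ↦ ζ ^ (a * e)` of the cyclic group of order `m`. -/
lemma sum_primitiveRoot_pow_s1 {k : Type*} [Field k] {m : ℕ} {ζ : k} (hζ : IsPrimitiveRoot ζ m)
    (e : ℕ) : ∑ a : Fin m, (ζ ^ (a : ℕ)) ^ e = if m ∣ e then (m : k) else 0 := by
  have h1 : ∀ a : ℕ, (ζ ^ a) ^ e = (ζ ^ e) ^ a := fun a => pow_right_comm ζ a e
  simp only [h1]
  rw [Fin.sum_univ_eq_sum_range (fun a => (ζ ^ e) ^ a) m]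
  split_ifs with h
  · simp [(hζ.pow_eq_one_iff_dvd e).2 h]
  · have hne : ζ ^ e ≠ 1 := fun h' => h ((hζ.pow_eq_one_iff_dvd e).1 h')
    rw [geom_sum_eq hne, ← pow_mul, mul_comm, pow_mul, hζ.pow_eq_one]
    simp

/-- The only exponent vector of total degree `∑ d i` satisfying all the divisibilities is `d`. -/
lemma eq_of_dvd_succ {n : ℕ} {d e : Fin (n + 1) → ℕ} (hmono : Monotone d)
    (hsum : ∑ i, e i = ∑ i, d i) (h : ∀ i : Fin n, d i.succ + 1 ∣ e i.succ + 1) : e = d := by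
  have hle : ∀ i : Fin n, d i.succ ≤ e i.succ := fun i => by
    have := Nat.le_of_dvd (Nat.succ_pos _) (h i)
    omega
  rw [Fin.sum_univ_succ, Fin.sum_univ_succ] at hsum
  have hs : ∀ i : Fin n, e i.succ = d i.succ := by
    intro i
    obtain ⟨m, hm⟩ := h i
    have hd0 : d 0 ≤ d i.succ := hmono (Fin.zero_le _)
    have h2 : ∑ j ∈ Finset.univ.erase i, d (Fin.succ j)
        ≤ ∑ j ∈ Finset.univ.erase i, e (Fin.succ j) :=
      Finset.sum_le_sum fun j _ => hle j
    have h3 := Finset.add_sum_erase Finset.univ (fun j : Fin n => d j.succ) (Finset.mem_univ i)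
    have h4 := Finset.add_sum_erase Finset.univ (fun j : Fin n => e j.succ) (Finset.mem_univ i)
    have hli := hle i
    have hm2 : m < 2 := by
      by_contra! hm2
      have := Nat.mul_le_mul_left (d i.succ + 1) hm2
      omega
    interval_cases m <;> omega
  simp only [hs] at hsum
  funext i
  refine Fin.cases ?_ hs i
  omega

/-- Explicit expression of a monomial as a linear combination of powers of linear forms,
over any field `k` containing primitive `(d_i+1)`-th roots of unity `ζ_i` and in which
`C = multinomial(d) ⋅ (d_1+1)⋯(d_n+1)` is invertible:
`x_0^{d_0} ⋯ x_n^{d_n} = C⁻¹ ⋅ Σ_{0 ≤ a_i ≤ d_i} (x_0 + ζ_1^{a_1} x_1 + ⋯ + ζ_n^{a_n} x_n)^d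
  ⋅ (ζ_1^{a_1} ⋯ ζ_n^{a_n})`. -/
theorem monomial_power_sum_identity (n : ℕ) (hn : 1 ≤ n) {k : Type*} [Field k]
    (d : Fin (n + 1) → ℕ) (hmono : Monotone d) (hpos : 0 < d 0)
    (ζ : Fin n → k) (hζ : ∀ i : Fin n, IsPrimitiveRoot (ζ i) (d i.succ + 1))
    (hC : IsUnit ((Nat.multinomial Finset.univ d : k) *
      ∏ i : Fin n, ((d i.succ : k) + 1))) :
    (∏ i, X i ^ d i : MvPolynomial (Fin (n + 1)) k)
      = C (Ring.inverse ((Nat.multinomial Finset.univ d : k) *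
            ∏ i : Fin n, ((d i.succ : k) + 1))) *
        ∑ a : (i : Fin n) → Fin (d i.succ + 1),
          (X 0 + ∑ i : Fin n, C (ζ i ^ (a i : ℕ)) * X i.succ) ^ (∑ i, d i)
            * C (∏ i : Fin n, ζ i ^ (a i : ℕ)) := by
  set N : ℕ := ∑ i, d i with hN
  set K : k := (Nat.multinomial Finset.univ d : k) * ∏ i : Fin n, ((d i.succ : k) + 1) with hK
  have hexp : ∀ a : (i : Fin n) → Fin (d i.succ + 1),
      (X 0 + ∑ i : Fin n, C (ζ i ^ (a i : ℕ)) * X i.succ : MvPolynomial (Fin (n + 1)) k) ^ N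
          * C (∏ i : Fin n, ζ i ^ (a i : ℕ))
        = ∑ e ∈ Finset.piAntidiag Finset.univ N,
            C (∏ i : Fin n, (ζ i ^ (a i : ℕ)) ^ (e i.succ + 1)) *
              (C (Nat.multinomial Finset.univ e : k) * ∏ i, X i ^ e i) := by
    intro a
    have h0 : (X 0 + ∑ i : Fin n, C (ζ i ^ (a i : ℕ)) * X i.succ : MvPolynomial (Fin (n + 1)) k)
        = ∑ i, Fin.cases (X 0) (fun i : Fin n => C (ζ i ^ (a i : ℕ)) * X i.succ) i := by
      rw [Fin.sum_univ_succ]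
      rfl
    rw [h0, Finset.sum_pow_eq_sum_piAntidiag, Finset.sum_mul]
    refine Finset.sum_congr rfl fun e _ => ?_
    rw [Fin.prod_univ_succ, Fin.prod_univ_succ]
    simp only [Fin.cases_zero, Fin.cases_succ, mul_pow, pow_succ, Finset.prod_mul_distrib,
      map_mul, map_prod, map_pow, map_natCast]
    ring
  -- A product of sums over the separate `a i`; this is where the sum over tuples factors.
  have hchar : ∀ e ∈ Finset.piAntidiag Finset.univ N,
      ∑ a : (i : Fin n) → Fin (d i.succ + 1), ∏ i : Fin n, (ζ i ^ (a i : ℕ)) ^ (e i.succ + 1)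
        = if e = d then ∏ i : Fin n, ((d i.succ : k) + 1) else 0 := by
    intro e he
    rw [← Fintype.prod_sum
      (fun (i : Fin n) (j : Fin (d i.succ + 1)) => (ζ i ^ (j : ℕ)) ^ (e i.succ + 1))]
    simp only [sum_primitiveRoot_pow_s1 (hζ _)]
    split_ifs with h
    · subst h
      simp
    · have hne : ∃ i : Fin n, ¬ d i.succ + 1 ∣ e i.succ + 1 := by
        by_contra! hall
        exact h (eq_of_dvd_succ hmono (Finset.mem_piAntidiag.1 he).1 hall)
      obtain ⟨i, hi⟩ := hne
      exact Finset.prod_eq_zero (Finset.mem_univ i) (if_neg hi)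
  have hmem : d ∈ Finset.piAntidiag Finset.univ N := by simp [hN]
  have hmain : ∑ a : (i : Fin n) → Fin (d i.succ + 1),
      (X 0 + ∑ i : Fin n, C (ζ i ^ (a i : ℕ)) * X i.succ : MvPolynomial (Fin (n + 1)) k) ^ N
          * C (∏ i : Fin n, ζ i ^ (a i : ℕ)) = C K * ∏ i, X i ^ d i := by
    rw [Finset.sum_congr rfl fun a _ => hexp a, Finset.sum_comm]
    simp only [← Finset.sum_mul, ← map_sum]
    rw [Finset.sum_eq_single_of_mem d hmem, hchar d hmem, if_pos rfl, hK, ← mul_assoc, ← map_mul,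
      mul_comm (∏ i : Fin n, ((d i.succ : k) + 1))]
    intro e he hne
    rw [hchar e he, if_neg hne, map_zero, zero_mul]
  rw [hmain, ← mul_assoc, ← map_mul, Ring.inverse_mul_cancel _ hC, map_one, one_mul]
end

section
/- Let n ≥ 1 and let 0 < d_0 ≤ d_1 ≤ ⋯ ≤ d_n be integers with d = d_0 + ⋯ + d_n. Then the Waring rank over ℂ of the monomial x_0^{d_0} x_1^{d_1} ⋯ x_n^{d_n} is at most (d_1+1)(d_2+1)⋯(d_n+1); i.e., there exist linear forms ℓ_1,…,ℓ_r ∈ ℂ[x_0,…,x_n] with r = (d_1+1)⋯(d_n+1) and x_0^{d_0}⋯x_n^{d_n} = ℓ_1^d + ⋯ + ℓ_r^d. -/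
/-!
Write `e 0 = 1`, `e i = d i + 1` for `i ≠ 0`, and let `ζ i` be a primitive `e i`-th root of unity.
Let `k` run over the tuples with `0 ≤ k i < e i`; there are `(d_1+1)⋯(d_n+1)` of them. Consider
`∑ k, (∏ i, (ζ i)^(k i)) * (∑ i, (ζ i)^(k i) * X i) ^ D` with `D = d_0 + ⋯ + d_n`.
In the multinomial expansion the monomial with exponents `a` gets the factor
`∏ i, ∑ j < e i, (ζ i)^(j * (a i + 1))`, which vanishes unless `e i ∣ a i + 1` for all `i`
(`sum_root_pow`). As `d 0` is the least exponent, the only such `a` of total degree `D` is `d`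
itself (`exponent_unique`). Hence the sum is a nonzero multiple of the monomial, and since `ℂ`
is algebraically closed the scalar weights are absorbed into the linear forms as `D`-th powers.
-/

open MvPolynomial

/-- Character orthogonality for the group of `N`-th roots of unity. -/
lemma sum_root_pow {N : ℕ} {ζ : ℂ} (h : IsPrimitiveRoot ζ N) (m : ℕ) :
    ∑ j : Fin N, (ζ ^ (j : ℕ)) ^ m = if N ∣ m then (N : ℂ) else 0 := by
  have h1 : ∀ j : Fin N, (ζ ^ (j : ℕ)) ^ m = (ζ ^ m) ^ (j : ℕ) := fun j => by
    rw [← pow_mul, ← pow_mul, mul_comm]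
  simp_rw [h1]
  rw [Fin.sum_univ_eq_sum_range (fun j => (ζ ^ m) ^ j) N]
  split_ifs with hm
  · simp [(h.pow_eq_one_iff_dvd m).2 hm]
  · have h2 : ζ ^ m - 1 ≠ 0 := fun h0 => hm ((h.pow_eq_one_iff_dvd m).1 (sub_eq_zero.1 h0))
    have h3 := geom_sum_mul (ζ ^ m) N
    rw [← pow_mul, mul_comm m N, pow_mul, h.pow_eq_one, one_pow, sub_self] at h3
    exact (mul_eq_zero.1 h3).resolve_right h2

/-- An exponent vector congruent to `d` modulo `d i + 1` in each coordinate `i ≠ 0` and of the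
same total degree is `d`: any excess in coordinate `i` is at least `d i + 1 > d 0`, which is more
than coordinate `0` can give up. -/
lemma exponent_unique {n : ℕ} {d a : Fin (n + 1) → ℕ} (hmono : Monotone d)
    (hsum : ∑ i, a i = ∑ i, d i) (hdvd : ∀ i, i ≠ 0 → d i + 1 ∣ a i + 1) : a = d := by
  have hle : ∀ i : Fin n, d i.succ ≤ a i.succ := fun i => by
    have := Nat.le_of_dvd (Nat.succ_pos _) (hdvd i.succ (Fin.succ_ne_zero i))
    omega
  rw [Fin.sum_univ_succ, Fin.sum_univ_succ] at hsum
  have heq : ∀ i : Fin n, a i.succ = d i.succ := by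
    intro i
    by_contra hne
    obtain ⟨c, hc⟩ := hdvd i.succ (Fin.succ_ne_zero i)
    have h0 : d 0 ≤ d i.succ := hmono (Fin.zero_le _)
    have hc2 : 2 ≤ c := by
      by_contra hlt
      interval_cases c <;> omega
    have hbig : 2 * (d i.succ + 1) ≤ a i.succ + 1 := by
      rw [hc]; nlinarith
    have hrest : ∑ j ∈ Finset.univ.erase i, d (Fin.succ j) ≤
        ∑ j ∈ Finset.univ.erase i, a (Fin.succ j) := Finset.sum_le_sum fun j _ => hle j
    have ha := Finset.add_sum_erase Finset.univ (fun j : Fin n => a j.succ) (Finset.mem_univ i)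
    have hd := Finset.add_sum_erase Finset.univ (fun j : Fin n => d j.succ) (Finset.mem_univ i)
    omega
  have h0 : a 0 = d 0 := by
    simp only [heq] at hsum
    omega
  funext i
  refine Fin.cases h0 heq i

/-- Averaging the `D`-th powers of the forms `∑ i, ζ i ^ k i * X i` against `∏ i, ζ i ^ k i`
isolates the monomial with exponents `d`, if `d` is the only exponent vector `a` of total
degree `D` with `e i ∣ a i + 1` for all `i`. -/
lemma weighted_sum_pow {ι : Type*} [Fintype ι] [DecidableEq ι] (d e : ι → ℕ) (ζ : ι → ℂ)
    (hζ : ∀ i, IsPrimitiveRoot (ζ i) (e i)) (hd : ∀ i, e i ∣ d i + 1)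
    (huniq : ∀ a : ι → ℕ, ∑ i, a i = ∑ i, d i → (∀ i, e i ∣ a i + 1) → a = d) :
    ∑ k : (∀ i, Fin (e i)), C (∏ i, ζ i ^ (k i : ℕ)) *
        (∑ i, C (ζ i ^ (k i : ℕ)) * X i : MvPolynomial ι ℂ) ^ (∑ i, d i)
      = C ((Nat.multinomial Finset.univ d : ℂ) * ∏ i, (e i : ℂ)) * ∏ i, X i ^ d i := by
  have hfac : ∀ a : ι → ℕ, ∑ k : (∀ i, Fin (e i)),
      (∏ i, ζ i ^ (k i : ℕ)) * ∏ i, (ζ i ^ (k i : ℕ)) ^ a i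
        = ∏ i, if e i ∣ a i + 1 then (e i : ℂ) else 0 := by
    intro a
    simp_rw [← sum_root_pow (hζ _), Finset.prod_univ_sum, Fintype.piFinset_univ,
      ← Finset.prod_mul_distrib, pow_succ']
  have hexp : ∀ k : (∀ i, Fin (e i)), C (∏ i, ζ i ^ (k i : ℕ)) *
        (∑ i, C (ζ i ^ (k i : ℕ)) * X i : MvPolynomial ι ℂ) ^ (∑ i, d i)
      = ∑ a ∈ Finset.piAntidiag Finset.univ (∑ i, d i),
          C ((∏ i, ζ i ^ (k i : ℕ)) * ∏ i, (ζ i ^ (k i : ℕ)) ^ a i) *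
            (C (Nat.multinomial Finset.univ a : ℂ) * ∏ i, X i ^ a i) := by
    intro k
    rw [Finset.sum_pow_eq_sum_piAntidiag, Finset.mul_sum]
    refine Finset.sum_congr rfl fun a _ => ?_
    simp only [mul_pow, Finset.prod_mul_distrib, C_mul, map_prod, map_pow, map_natCast]
    ring
  simp_rw [hexp]
  rw [Finset.sum_comm]
  simp_rw [← Finset.sum_mul, ← map_sum, hfac]
  rw [Finset.sum_eq_single d]
  · simp only [hd, if_true, C_mul]
    ring
  · intro a ha hne
    have hsum : ∑ i, a i = ∑ i, d i := (Finset.mem_piAntidiag.1 ha).1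
    obtain ⟨i, hi⟩ : ∃ i, ¬ e i ∣ a i + 1 := by
      by_contra! hall
      exact hne (huniq a hsum hall)
    rw [Finset.prod_eq_zero (Finset.mem_univ i) (if_neg hi), map_zero, zero_mul]
  · intro h
    exact absurd (Finset.mem_piAntidiag.2 ⟨rfl, fun i _ => Finset.mem_univ i⟩) h

/-- Upper bound for the Waring rank of a monomial: with `0 < d_0 ≤ ⋯ ≤ d_n` and
`d = d_0 + ⋯ + d_n`, the monomial `x_0^{d_0} ⋯ x_n^{d_n}` is a sum of
`(d_1+1)⋯(d_n+1)` many `d`-th powers of linear forms over `ℂ`. -/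
theorem waring_rank_upper_bound (n : ℕ) (hn : 1 ≤ n)
    (d : Fin (n + 1) → ℕ) (hmono : Monotone d) (hpos : 0 < d 0) :
    ∃ ℓ : Fin (∏ i ∈ Finset.univ.erase 0, (d i + 1)) → (Fin (n + 1) → ℂ),
      (∏ i, X i ^ d i : MvPolynomial (Fin (n + 1)) ℂ)
        = ∑ j, (∑ i, C (ℓ j i) * X i) ^ (∑ i, d i) := by
  -- Taking `e 0 = 1` makes the coordinate `0` of the index tuples trivial.
  set e : Fin (n + 1) → ℕ := fun i => if i = 0 then 1 else d i + 1 with he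
  have he0 : ∀ i, e i ≠ 0 := fun i => by simp only [he]; split_ifs <;> omega
  have hζ : ∀ i, IsPrimitiveRoot (Complex.exp (2 * Real.pi * Complex.I / e i)) (e i) :=
    fun i => Complex.isPrimitiveRoot_exp (e i) (he0 i)
  generalize hz : (fun i => Complex.exp (2 * Real.pi * Complex.I / e i)) = ζ
  replace hζ : ∀ i, IsPrimitiveRoot (ζ i) (e i) := fun i => by rw [← hz]; exact hζ i
  have key := weighted_sum_pow d e ζ hζ
    (fun i => by simp only [he]; split_ifs <;> simp)
    (fun a hsum ha => exponent_unique hmono hsum fun i hi => by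
      simpa [he, hi] using ha i)
  set c : ℂ := (Nat.multinomial Finset.univ d : ℂ) * ∏ i, (e i : ℂ) with hc
  have hc0 : c ≠ 0 := by
    refine mul_ne_zero ?_ (Finset.prod_ne_zero_iff.2 fun i _ => Nat.cast_ne_zero.2 (he0 i))
    exact Nat.cast_ne_zero.2 (Nat.multinomial_pos _ _).ne'
  have hD : 0 < ∑ i, d i :=
    lt_of_lt_of_le hpos (Finset.single_le_sum (f := d) (fun _ _ => Nat.zero_le _)
      (Finset.mem_univ 0))
  have hroot : ∀ k : (∀ i, Fin (e i)), ∃ α : ℂ,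
      α ^ (∑ i, d i) = c⁻¹ * ∏ i, ζ i ^ (k i : ℕ) :=
    fun k => IsAlgClosed.exists_pow_nat_eq _ hD
  choose α hα using hroot
  have hcard : Fintype.card (∀ i, Fin (e i)) = ∏ i ∈ Finset.univ.erase 0, (d i + 1) := by
    rw [Fintype.card_pi, ← Finset.mul_prod_erase _ _ (Finset.mem_univ 0)]
    simp only [Fintype.card_fin]
    rw [show e 0 = 1 by simp [he], one_mul]
    exact Finset.prod_congr rfl fun i hi => by simp [he, Finset.ne_of_mem_erase hi]
  let E := Fintype.equivFinOfCardEq hcard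
  refine ⟨fun j i => α (E.symm j) * ζ i ^ (E.symm j i : ℕ), ?_⟩
  rw [E.symm.sum_comp (fun k => (∑ i, C (α k * ζ i ^ (k i : ℕ)) * X i :
    MvPolynomial (Fin (n + 1)) ℂ) ^ (∑ i, d i))]
  have hterm : ∀ k : (∀ i, Fin (e i)), (∑ i, C (α k * ζ i ^ (k i : ℕ)) * X i :
      MvPolynomial (Fin (n + 1)) ℂ) ^ (∑ i, d i)
      = C c⁻¹ * (C (∏ i, ζ i ^ (k i : ℕ)) *
        (∑ i, C (ζ i ^ (k i : ℕ)) * X i) ^ (∑ i, d i)) := by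
    intro k
    simp_rw [C_mul, mul_assoc, ← Finset.mul_sum]
    rw [mul_pow, ← C_pow, hα, C_mul, mul_assoc]
  simp_rw [hterm]
  rw [← Finset.mul_sum, key, ← mul_assoc, ← C_mul, inv_mul_cancel₀ hc0, C_1, one_mul]
end

section
/- Let F ∈ ℂ[x_0,…,x_n] be homogeneous of degree d and suppose F = ℓ_1^d + ⋯ + ℓ_r^d is a Waring decomposition, i.e., r = R(F) is the Waring rank. If c_1,…,c_r ∈ ℂ are scalars with F = c_1 ℓ_1^d + ⋯ + c_r ℓ_r^d, then c_1 = c_2 = ⋯ = c_r = 1. -/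
/-! The representations of `F` as a combination of the powers `ℓ_j^D` form an affine space. If
`c_k ≠ 1`, the line through the coefficient vectors `(1, …, 1)` and `c` contains a point whose
`k`-th coordinate vanishes. The remaining `r - 1` coefficients are `D`-th powers in `ℂ` and can be
absorbed into the linear forms, so `F` is a sum of `r - 1` powers, against the minimality of `r`. -/

open MvPolynomial

/-- If `F = ℓ_1^d + ⋯ + ℓ_r^d` is a Waring decomposition of a homogeneous polynomial `F`
of degree `d` (i.e. `r` is the Waring rank of `F`), and `F = c_1 ℓ_1^d + ⋯ + c_r ℓ_r^d`
for scalars `c_j ∈ ℂ`, then all `c_j = 1`. -/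
theorem unique_coefficients_in_waring_decomposition (n D r : ℕ) (hD : 0 < D)
    (F : MvPolynomial (Fin (n + 1)) ℂ) (hF : F.IsHomogeneous D)
    (ℓ : Fin r → (Fin (n + 1) → ℂ))
    (hdec : F = ∑ j, (∑ i, C (ℓ j i) * X i) ^ D)
    (hmin : IsLeast {s : ℕ | ∃ m : Fin s → (Fin (n + 1) → ℂ),
        F = ∑ j, (∑ i, C (m j i) * X i) ^ D} r)
    (c : Fin r → ℂ)
    (hc : F = ∑ j, C (c j) * (∑ i, C (ℓ j i) * X i) ^ D) :
    ∀ j, c j = 1 := by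
  intro k
  by_contra hk
  cases r with
  | zero => exact k.elim0
  | succ s =>
    have hk' : 1 - c k ≠ 0 := sub_ne_zero.mpr (Ne.symm hk)
    -- The parameter at which the line `1 + t (c - 1)` meets the hyperplane `a_k = 0`.
    set t : ℂ := (1 - c k)⁻¹ with ht
    have hF' : F = ∑ j, C (1 + t * (c j - 1)) * (∑ i, C (ℓ j i) * X i) ^ D := by
      have h : ∑ j, C (1 + t * (c j - 1)) * (∑ i, C (ℓ j i) * X i) ^ D
          = (∑ j, (∑ i, C (ℓ j i) * X i) ^ D)
            + C t * ((∑ j, C (c j) * (∑ i, C (ℓ j i) * X i) ^ D)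
              - ∑ j, (∑ i, C (ℓ j i) * X i) ^ D) := by
        rw [← Finset.sum_sub_distrib, Finset.mul_sum, ← Finset.sum_add_distrib]
        refine Finset.sum_congr rfl fun j _ => ?_
        simp only [map_add, map_mul, map_sub, map_one]
        ring
      rw [h, ← hc, ← hdec, sub_self, mul_zero, add_zero]
    have hzero : 1 + t * (c k - 1) = 0 := by
      rw [ht]
      field_simp
      ring
    choose b hb using fun j => IsAlgClosed.exists_pow_nat_eq (1 + t * (c j - 1)) hD
    have hs : s + 1 ≤ s := by
      refine hmin.2 ⟨fun j i => b (k.succAbove j) * ℓ (k.succAbove j) i, ?_⟩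
      rw [Fin.sum_univ_succAbove _ k, hzero, C_0, zero_mul, zero_add] at hF'
      rw [hF']
      refine Finset.sum_congr rfl fun j _ => ?_
      rw [← hb, C_pow, ← mul_pow, Finset.mul_sum]
      simp only [C_mul, mul_assoc]
    omega
end

section
/- Let F = x_0^{d_0} ⋯ x_n^{d_n} with 0 < d_0 ≤ ⋯ ≤ d_n, d = Σ d_i, and suppose F = ℓ_1^d + ⋯ + ℓ_r^d with r = R(F) = (d_1+1)⋯(d_n+1). Let I ⊂ S = ℂ[α_0,…,α_n] be the homogeneous vanishing ideal of the point set {[ℓ_1],…,[ℓ_r]} ⊂ ℙ^n, and let J = (α_1^{d_1+1},…,α_n^{d_n+1}) ⊂ S. Then for every t ≥ 0, dim_ℂ I_t = dim_ℂ J_t, where I_t and J_t denote the degree-t homogeneous components; i.e., I and J have the same Hilbert function. -/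
/-!
Let `V_t` be the span of the standard monomials of degree `t`, those `α^m` with `m_i ≤ d_i` for all
`i ≥ 1`. It is a complement of `J_t` in `S_t`, since `J` is a monomial ideal. The theorem follows
because `V_t` is a complement of `I_t` as well.

Apolarity is the only place where the decomposition enters (`coeff_eq_zero_of_vanish`): a form that
vanishes at all `ℓ_j` has zero coefficient at every `α^b` with `b ≤ d`. Indeed, comparing
coefficients in `F = ∑ ℓ_j^d` shows that `∑_j ℓ_j^a` vanishes for every exponent `a ≠ (d_0,…,d_n)`
of degree `d`, and does not vanish for `a = (d_0,…,d_n)`; multiply the form by `α^{(d_0,…,d_n) - b}`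
and sum its values over the points.

* `V_t ∩ I_t = 0` (`stdSpan_eq_zero`). More strongly, let `p ∈ V_t` vanish at the points off the
  hyperplane `α_0 = 0`. Then `α_0 p` vanishes at all the points, so, as `d_0 ≥ 1`, apolarity kills
  the monomials of `p` without `α_0`. Hence `p = α_0 q` with `q ∈ V_{t-1}` vanishing at the same
  points, and induction on `t` gives `p = 0`.
* No point lies on `α_0 = 0` (`apply_zero_ne_zero`). For `t ≥ d_1 + ⋯ + d_n` the dimension of `V_t`
  is `(d_1+1)⋯(d_n+1) = r`, while by the previous item it is at most the number of points off
  that hyperplane.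
* `V_t + I_t = S_t` (`exists_interpolant`). For large `t`, evaluation maps `V_t` isomorphically
  onto `ℂ^r`. For the other `t` one descends: write `α_0 p = v + i` in degree `t + 1`. The monomials
  of `v` without `α_0` appear, up to sign, in `i`, so apolarity shows that there are none. Thus
  `v = α_0 w`, and `p - w` vanishes at all points because `α_0` vanishes at none of them.
-/

open MvPolynomial

/-- The degree-`t` homogeneous component of a homogeneous ideal `I ⊆ ℂ[α_0,…,α_n]`,
as a `ℂ`-subspace of the polynomial ring. -/
noncomputable def idealGradedPiece {n : ℕ} (I : Ideal (MvPolynomial (Fin (n + 1)) ℂ))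
    (t : ℕ) : Submodule ℂ (MvPolynomial (Fin (n + 1)) ℂ) :=
  Submodule.restrictScalars ℂ I ⊓ homogeneousSubmodule (Fin (n + 1)) ℂ t

/-! ### Standard monomials -/

/-- Exponents of degree `t` of the standard monomials of `(α_1^{d_1+1},…,α_n^{d_n+1})`. -/
def stdExponents {n : ℕ} (d : Fin (n + 1) → ℕ) (t : ℕ) : Set (Fin (n + 1) →₀ ℕ) :=
  {m | m.degree = t ∧ ∀ i : Fin n, m i.succ ≤ d i.succ}

/-- The span of the standard monomials of degree `t`. -/
noncomputable abbrev stdSpan {n : ℕ} (d : Fin (n + 1) → ℕ) (t : ℕ) :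
    Submodule ℂ (MvPolynomial (Fin (n + 1)) ℂ) :=
  restrictSupport ℂ (stdExponents d t)

lemma degree_eq_weight {n : ℕ} (m : Fin (n + 1) →₀ ℕ) :
    m.degree = Finsupp.weight (1 : Fin (n + 1) → ℕ) m :=
  DFunLike.congr_fun Finsupp.degree_eq_weight_one m

lemma mem_stdSpan {n : ℕ} {d : Fin (n + 1) → ℕ} {t : ℕ} {p : MvPolynomial (Fin (n + 1)) ℂ} :
    p ∈ stdSpan d t ↔
      p.IsHomogeneous t ∧ ∀ m, coeff m p ≠ 0 → ∀ i : Fin n, m i.succ ≤ d i.succ := by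
  rw [mem_restrictSupport_iff]
  constructor
  · intro h
    refine ⟨fun m hm => ?_, fun m hm => (h (mem_support_iff.2 hm)).2⟩
    rw [← degree_eq_weight]
    exact (h (mem_support_iff.2 hm)).1
  · rintro ⟨h1, h2⟩ m hm
    have hm' := mem_support_iff.1 hm
    refine ⟨?_, h2 m hm'⟩
    have := h1 hm'
    rwa [← degree_eq_weight] at this

lemma finite_stdExponents {n : ℕ} (d : Fin (n + 1) → ℕ) (t : ℕ) : (stdExponents d t).Finite := by
  refine (Finsupp.finite_of_nat_weight_eq (1 : Fin (n + 1) → ℕ) (by simp) t).subset ?_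
  rintro m ⟨hm, -⟩
  rwa [Set.mem_ofPred_eq, ← degree_eq_weight]

instance {n : ℕ} (d : Fin (n + 1) → ℕ) (t : ℕ) : Module.Finite ℂ (stdSpan d t) := by
  have := (finite_stdExponents d t).to_subtype
  exact Module.Finite.of_basis (basisRestrictSupport ℂ (stdExponents d t))

/-- In degrees `t ≥ d_1 + ⋯ + d_n`, every monomial `α^b` in `α_1,…,α_n` with all `b_i ≤ d_i` is
filled up by a power of `α_0` to a standard monomial of degree `t`. -/
lemma finrank_stdSpan_ge {n : ℕ} (d : Fin (n + 1) → ℕ) (t : ℕ) (ht : ∑ i : Fin n, d i.succ ≤ t) :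
    ∏ i : Fin n, (d i.succ + 1) ≤ Module.finrank ℂ (stdSpan d t) := by
  have := (finite_stdExponents d t).to_subtype
  rw [Module.finrank_eq_nat_card_basis (basisRestrictSupport ℂ (stdExponents d t))]
  let f : ((i : Fin n) → Fin (d i.succ + 1)) → stdExponents d t := fun b =>
    ⟨Finsupp.equivFunOnFinite.symm
      (Fin.cons (t - ∑ i, (b i : ℕ)) (fun i => (b i : ℕ)) : Fin (n + 1) → ℕ), by
      have hb : ∑ i, (b i : ℕ) ≤ ∑ i : Fin n, d i.succ :=
        Finset.sum_le_sum fun i _ => Nat.lt_succ_iff.1 (b i).2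
      constructor
      -- The subtraction in the exponent of `α_0` does not truncate, because `∑ b_i ≤ t`.
      · simp only [Finsupp.degree_eq_sum, Finsupp.equivFunOnFinite_symm_apply_apply,
          Fin.sum_univ_succ, Fin.cons_zero, Fin.cons_succ]
        omega
      · intro i
        simpa using Nat.lt_succ_iff.1 (b i).2⟩
  have hf : Function.Injective f := by
    intro b c h
    funext i
    have := congrArg (fun m => m.1 i.succ) h
    simpa [f, Fin.ext_iff] using this
  have := Nat.card_le_card_of_injective f hf
  simpa [Nat.card_eq_fintype_card, Fintype.card_pi] using this

lemma exists_eq_X_mul {n t : ℕ} {p : MvPolynomial (Fin (n + 1)) ℂ} (hp : p.IsHomogeneous (t + 1))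
    (h : ∀ m, m 0 = 0 → coeff m p = 0) :
    ∃ q : MvPolynomial (Fin (n + 1)) ℂ, q.IsHomogeneous t ∧ p = X 0 * q := by
  have hd : (X 0 : MvPolynomial (Fin (n + 1)) ℂ) ∣ p := by
    rw [X_dvd_iff_modMonomial_eq_zero]
    ext m
    by_cases hm : Finsupp.single 0 1 ≤ m
    · simp [coeff_modMonomial_of_le _ hm]
    · rw [coeff_modMonomial_of_not_le _ hm, coeff_zero]
      apply h
      simpa using hm
  obtain ⟨q, rfl⟩ := hd
  refine ⟨q, fun m hm => ?_, rfl⟩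
  rw [← coeff_X_mul m 0] at hm
  have := hp hm
  rw [← degree_eq_weight] at this ⊢
  simp only [map_add, Finsupp.degree_single] at this
  omega

/-! ### Apolarity and points of a Waring decomposition -/

section Waring

variable {n r : ℕ} {d : Fin (n + 1) → ℕ} {ℓ : Fin r → (Fin (n + 1) → ℂ)}

/-- The coefficient of `x^a` in `F = ∑ ℓ_j^d`, for `a` of degree `d`. -/
lemma sum_power_mul_multinomial
    (hdec : (∏ i, X i ^ d i : MvPolynomial (Fin (n + 1)) ℂ)
        = ∑ j, (∑ i, C (ℓ j i) * X i) ^ (∑ i, d i))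
    (a : Fin (n + 1) →₀ ℕ) (ha : a.degree = ∑ i, d i) :
    (a.multinomial : ℂ) * ∑ j, ∏ i, ℓ j i ^ a i
      = if a = Finsupp.equivFunOnFinite.symm d then 1 else 0 := by
  have h := congrArg (coeff a) hdec
  have e : (∏ i, X i ^ d i : MvPolynomial (Fin (n + 1)) ℂ)
      = monomial (Finsupp.equivFunOnFinite.symm d) 1 := by
    rw [monomial_eq, Finsupp.prod_fintype _ _ (by simp)]
    simp
  rw [e, coeff_monomial, coeff_sum] at h
  rw [Finset.mul_sum]
  simp only [eq_comm (a := a)]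
  rw [h]
  refine Finset.sum_congr rfl fun j _ => ?_
  simp only [← smul_eq_C_mul]
  rw [coeff_linearCombination_X_pow_of_fintype, if_pos (by rw [← ha]; rfl),
    Finsupp.prod_fintype _ _ (by simp)]

/-- Apolarity: forms vanishing at all the `ℓ_j` annihilate `F` under differentiation, that is, they
contain no monomial dividing `α_0^{d_0} ⋯ α_n^{d_n}`. -/
lemma coeff_eq_zero_of_vanish
    (hdec : (∏ i, X i ^ d i : MvPolynomial (Fin (n + 1)) ℂ)
        = ∑ j, (∑ i, C (ℓ j i) * X i) ^ (∑ i, d i))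
    {t : ℕ} {p : MvPolynomial (Fin (n + 1)) ℂ} (hp : p.IsHomogeneous t)
    (hv : ∀ j, eval (ℓ j) p = 0) (b : Fin (n + 1) →₀ ℕ) (hb : ∀ i, b i ≤ d i) :
    coeff b p = 0 := by
  by_contra hne
  set D : Fin (n + 1) →₀ ℕ := Finsupp.equivFunOnFinite.symm d with hD
  have hbD : b ≤ D := fun i => hb i
  have hDdeg : D.degree = ∑ i, d i := by simp [Finsupp.degree_eq_sum, hD]
  have hbt : b.degree = t := by
    rw [degree_eq_weight]; exact hp hne
  set q := monomial (D - b) (1 : ℂ) * p with hq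
  have hqhom : q.IsHomogeneous (∑ i, d i) := by
    have := (isHomogeneous_monomial (1 : ℂ) (rfl : (D - b).degree = _)).mul hp
    rwa [← hbt, ← map_add, tsub_add_cancel_of_le hbD, hDdeg] at this
  have hqD : coeff D q = coeff b p := by
    have := coeff_monomial_mul b (D - b) 1 p
    rwa [tsub_add_cancel_of_le hbD, one_mul] at this
  have h0 : ∑ j, eval (ℓ j) q = 0 := Finset.sum_eq_zero fun j _ => by simp [hq, hv j]
  simp only [eval_eq'] at h0
  rw [Finset.sum_comm] at h0
  simp only [← Finset.mul_sum] at h0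
  have key := sum_power_mul_multinomial hdec D hDdeg
  rw [if_pos rfl] at key
  rw [Finset.sum_eq_single D] at h0
  · rw [hqD] at h0
    rcases mul_eq_zero.1 h0 with h | h
    · exact hne h
    · simp [h] at key
  · intro m hm hmD
    have hmdeg : m.degree = ∑ i, d i := by
      rw [degree_eq_weight]; exact hqhom (mem_support_iff.1 hm)
    have := sum_power_mul_multinomial hdec m hmdeg
    rw [if_neg hmD] at this
    rcases mul_eq_zero.1 this with h | h
    · exact absurd (Nat.cast_eq_zero.1 h) (Nat.multinomial_pos _ _).ne'
    · rw [h, mul_zero]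
  · intro h
    rw [notMem_support_iff.1 h, zero_mul]

/-- Apolarity for `α_0 p`, which vanishes at all the `ℓ_j` as soon as `p` vanishes at those off the
hyperplane `α_0 = 0`. Since `d_0 ≥ 1`, one factor `α_0` is allowed. -/
lemma coeff_eq_zero_of_X_mul_vanish (hpos : 0 < d 0)
    (hdec : (∏ i, X i ^ d i : MvPolynomial (Fin (n + 1)) ℂ)
        = ∑ j, (∑ i, C (ℓ j i) * X i) ^ (∑ i, d i))
    {t : ℕ} {p : MvPolynomial (Fin (n + 1)) ℂ} (hp : p.IsHomogeneous t)
    (hv : ∀ j, ℓ j 0 ≠ 0 → eval (ℓ j) p = 0) (b : Fin (n + 1) →₀ ℕ) (hb0 : b 0 = 0)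
    (hb : ∀ i : Fin n, b i.succ ≤ d i.succ) :
    coeff b p = 0 := by
  rw [← coeff_X_mul b 0]
  refine coeff_eq_zero_of_vanish hdec ((isHomogeneous_X ℂ 0).mul hp) (fun j => ?_) _ ?_
  · by_cases h : ℓ j 0 = 0
    · simp [h]
    · simp [hv j h]
  · intro i
    refine Fin.cases ?_ (fun i => ?_) i
    · simp [hb0]; omega
    · simpa using hb i

/-- The points off the hyperplane `α_0 = 0` already impose enough conditions to kill every
combination of standard monomials. -/
lemma stdSpan_eq_zero (hpos : 0 < d 0)
    (hdec : (∏ i, X i ^ d i : MvPolynomial (Fin (n + 1)) ℂ)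
        = ∑ j, (∑ i, C (ℓ j i) * X i) ^ (∑ i, d i))
    (t : ℕ) (p : MvPolynomial (Fin (n + 1)) ℂ) (hp : p ∈ stdSpan d t)
    (hv : ∀ j, ℓ j 0 ≠ 0 → eval (ℓ j) p = 0) : p = 0 := by
  induction t generalizing p with
  | zero =>
    obtain ⟨hhom, hs⟩ := mem_stdSpan.1 hp
    ext m
    by_contra hm
    have hdeg := hhom hm
    rw [← degree_eq_weight] at hdeg
    have hm0 : m = 0 := (Finsupp.degree_eq_zero_iff m).1 hdeg
    exact hm (coeff_eq_zero_of_X_mul_vanish hpos hdec hhom hv m (by simp [hm0]) (hs m hm))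
  | succ t ih =>
    obtain ⟨hhom, hs⟩ := mem_stdSpan.1 hp
    obtain ⟨q, hq, rfl⟩ := exists_eq_X_mul hhom fun m hm0 => by
      by_contra hm
      exact hm (coeff_eq_zero_of_X_mul_vanish hpos hdec hhom hv m hm0 (hs m hm))
    rw [ih q, mul_zero]
    · refine mem_stdSpan.2 ⟨hq, fun m hm i => ?_⟩
      rw [← coeff_X_mul m 0] at hm
      simpa using hs _ hm i
    · intro j hj
      have := hv j hj
      rw [map_mul, eval_X] at this
      exact (mul_eq_zero.1 this).resolve_left hj

/-- Evaluation at those points of the decomposition that lie off the hyperplane `α_0 = 0`. -/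
noncomputable def evalOff (ℓ : Fin r → (Fin (n + 1) → ℂ)) :
    MvPolynomial (Fin (n + 1)) ℂ →ₗ[ℂ] ({j : Fin r // ℓ j 0 ≠ 0} → ℂ) :=
  LinearMap.pi fun j => (aeval (ℓ j.1)).toLinearMap

@[simp] lemma evalOff_apply (p : MvPolynomial (Fin (n + 1)) ℂ) (j : {j : Fin r // ℓ j 0 ≠ 0}) :
    evalOff ℓ p j = eval (ℓ j.1) p := by
  simp [evalOff, aeval_eq_eval]

lemma evalOff_injective (hpos : 0 < d 0)
    (hdec : (∏ i, X i ^ d i : MvPolynomial (Fin (n + 1)) ℂ)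
        = ∑ j, (∑ i, C (ℓ j i) * X i) ^ (∑ i, d i)) (t : ℕ) :
    Function.Injective ((evalOff ℓ).domRestrict (stdSpan d t)) := by
  rw [← LinearMap.ker_eq_bot, LinearMap.ker_eq_bot']
  rintro ⟨p, hp⟩ h
  refine Subtype.ext (stdSpan_eq_zero hpos hdec t p hp fun j hj => ?_)
  simpa using congrFun h ⟨j, hj⟩

lemma finrank_stdSpan_le_card (hpos : 0 < d 0)
    (hdec : (∏ i, X i ^ d i : MvPolynomial (Fin (n + 1)) ℂ)
        = ∑ j, (∑ i, C (ℓ j i) * X i) ^ (∑ i, d i)) (t : ℕ) :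
    Module.finrank ℂ (stdSpan d t) ≤ Fintype.card {j : Fin r // ℓ j 0 ≠ 0} := by
  simpa using LinearMap.finrank_le_finrank_of_injective (evalOff_injective hpos hdec t)

/-- If some point were on the hyperplane `α_0 = 0`, the `r`-dimensional space of standard monomials
of large degree would embed into a space of dimension less than `r`. -/
lemma apply_zero_ne_zero (hpos : 0 < d 0) (hr : r = ∏ i : Fin n, (d i.succ + 1))
    (hdec : (∏ i, X i ^ d i : MvPolynomial (Fin (n + 1)) ℂ)
        = ∑ j, (∑ i, C (ℓ j i) * X i) ^ (∑ i, d i)) (j : Fin r) : ℓ j 0 ≠ 0 := by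
  by_contra h
  have h1 := finrank_stdSpan_ge d _ le_rfl
  have h2 := finrank_stdSpan_le_card hpos hdec (∑ i : Fin n, d i.succ)
  have h3 : Fintype.card {j : Fin r // ℓ j 0 ≠ 0} < Fintype.card (Fin r) :=
    Fintype.card_subtype_lt (x := j) (by simpa using h)
  rw [Fintype.card_fin] at h3
  omega

/-- In large degrees, evaluation at the points is an isomorphism on the span of the standard
monomials. -/
lemma exists_interpolant_of_large (hpos : 0 < d 0) (hr : r = ∏ i : Fin n, (d i.succ + 1))
    (hdec : (∏ i, X i ^ d i : MvPolynomial (Fin (n + 1)) ℂ)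
        = ∑ j, (∑ i, C (ℓ j i) * X i) ^ (∑ i, d i))
    {t : ℕ} (ht : ∑ i : Fin n, d i.succ ≤ t) (p : MvPolynomial (Fin (n + 1)) ℂ) :
    ∃ v ∈ stdSpan d t, ∀ j, eval (ℓ j) (p - v) = 0 := by
  have h1 := finrank_stdSpan_ge d t ht
  have h2 := finrank_stdSpan_le_card hpos hdec t
  have h3 := Fintype.card_subtype_le (fun j : Fin r => ℓ j 0 ≠ 0)
  rw [Fintype.card_fin] at h3
  have hdim : Module.finrank ℂ (stdSpan d t)
      = Module.finrank ℂ ({j : Fin r // ℓ j 0 ≠ 0} → ℂ) := by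
    rw [Module.finrank_fintype_fun_eq_card]
    omega
  obtain ⟨v, hv⟩ := (LinearMap.injective_iff_surjective_of_finrank_eq_finrank hdim).1
    (evalOff_injective hpos hdec t) (evalOff ℓ p)
  refine ⟨v.1, v.2, fun j => ?_⟩
  have := congrFun hv ⟨j, apply_zero_ne_zero hpos hr hdec j⟩
  simp only [LinearMap.domRestrict_apply, evalOff_apply] at this
  rw [map_sub, this, sub_self]

/-- `S_t = V_t + I_t` for every `t`, by descent from large degrees. -/
lemma exists_interpolant (hpos : 0 < d 0) (hr : r = ∏ i : Fin n, (d i.succ + 1))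
    (hdec : (∏ i, X i ^ d i : MvPolynomial (Fin (n + 1)) ℂ)
        = ∑ j, (∑ i, C (ℓ j i) * X i) ^ (∑ i, d i))
    (t : ℕ) (p : MvPolynomial (Fin (n + 1)) ℂ) (hp : p.IsHomogeneous t) :
    ∃ v ∈ stdSpan d t, ∀ j, eval (ℓ j) (p - v) = 0 := by
  -- Induction on the number `k` of steps from `t` up to the degrees where the claim is known.
  obtain ⟨k, hk⟩ : ∃ k, ∑ i : Fin n, d i.succ ≤ t + k := ⟨_, Nat.le_add_left _ _⟩
  induction k generalizing t p with
  | zero => exact exists_interpolant_of_large hpos hr hdec (by simpa using hk) p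
  | succ k ih =>
    have hXp : (X 0 * p).IsHomogeneous (t + 1) := by
      simpa [add_comm] using (isHomogeneous_X ℂ (0 : Fin (n + 1))).mul hp
    obtain ⟨v, hv, hvan⟩ := ih (t + 1) (X 0 * p) hXp (by omega)
    obtain ⟨hvhom, hvs⟩ := mem_stdSpan.1 hv
    obtain ⟨w, hw, rfl⟩ := exists_eq_X_mul hvhom fun m hm0 => by
      by_contra hm
      -- The coefficient of `α^m` in `α_0 p - v` is that of `-v`, as `m` has no `α_0`.
      have hle : ∀ i, m i ≤ d i := Fin.cases (by omega) (hvs m hm)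
      have := coeff_eq_zero_of_vanish hdec (hXp.sub hvhom) hvan m hle
      rw [coeff_sub, coeff_X_mul', if_neg (by simp [hm0]), zero_sub, neg_eq_zero] at this
      exact hm this
    refine ⟨w, mem_stdSpan.2 ⟨hw, fun m hm i => ?_⟩, fun j => ?_⟩
    · rw [← coeff_X_mul m 0] at hm
      simpa using hvs _ hm i
    · have := hvan j
      rw [← mul_sub, map_mul, eval_X] at this
      exact (mul_eq_zero.1 this).resolve_left (apply_zero_ne_zero hpos hr hdec j)

end Waring

/-! ### Graded pieces of the two ideals -/

lemma eval_const_mul_of_isHomogeneous {n t : ℕ} {p : MvPolynomial (Fin (n + 1)) ℂ}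
    (hp : p.IsHomogeneous t) (x : Fin (n + 1) → ℂ) (c : ℂ) :
    eval (fun i => c * x i) p = c ^ t * eval x p := by
  rw [eval_eq', eval_eq', Finset.mul_sum]
  refine Finset.sum_congr rfl fun m hm => ?_
  have := hp (mem_support_iff.1 hm)
  rw [← degree_eq_weight, Finsupp.degree_eq_sum] at this
  simp only [mul_pow, Finset.prod_mul_distrib, Finset.prod_pow_eq_pow_sum, this]
  ring

lemma mem_powers_ideal_iff {n : ℕ} (d : Fin (n + 1) → ℕ) (p : MvPolynomial (Fin (n + 1)) ℂ) :
    p ∈ Ideal.span (Set.range fun i : Fin n =>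
        (X i.succ : MvPolynomial (Fin (n + 1)) ℂ) ^ (d i.succ + 1)) ↔
      ∀ m, coeff m p ≠ 0 → ∃ i : Fin n, d i.succ < m i.succ := by
  have : (Set.range fun i : Fin n =>
        (X i.succ : MvPolynomial (Fin (n + 1)) ℂ) ^ (d i.succ + 1))
      = (fun s => monomial s (1 : ℂ)) ''
        Set.range fun i : Fin n => Finsupp.single i.succ (d i.succ + 1) := by
    rw [← Set.range_comp]
    simp [Function.comp_def, X_pow_eq_monomial]
  rw [this, mem_ideal_span_monomial_image]
  simp only [mem_support_iff, Set.mem_range, exists_exists_eq_and, Finsupp.single_le_iff,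
    Nat.succ_le_iff]

/-- The dimension of `A_t`, when the standard monomials of degree `t` form a basis of `S_t / A_t`. -/
lemma finrank_of_complement {n t : ℕ} {d : Fin (n + 1) → ℕ}
    (A : Ideal (MvPolynomial (Fin (n + 1)) ℂ))
    (hzero : ∀ p ∈ A, p ∈ stdSpan d t → p = 0)
    (hsup : ∀ p : MvPolynomial (Fin (n + 1)) ℂ, p.IsHomogeneous t → ∃ v ∈ stdSpan d t, p - v ∈ A) :
    Module.finrank ℂ (idealGradedPiece A t) + Module.finrank ℂ (stdSpan d t)
      = Module.finrank ℂ (homogeneousSubmodule (Fin (n + 1)) ℂ t) := by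
  have hfin : FiniteDimensional ℂ (homogeneousSubmodule (Fin (n + 1)) ℂ t) :=
    Module.Finite.iff_fg.2 (homogeneousSubmodule_fg _ _ t)
  have : FiniteDimensional ℂ (idealGradedPiece A t) :=
    Submodule.finiteDimensional_of_le (inf_le_right : idealGradedPiece A t ≤ _)
  have hinf : idealGradedPiece A t ⊓ stdSpan d t = ⊥ := by
    rw [eq_bot_iff]
    rintro p ⟨⟨hpA, -⟩, hp⟩
    exact hzero p hpA hp
  have hs : idealGradedPiece A t ⊔ stdSpan d t = homogeneousSubmodule (Fin (n + 1)) ℂ t := by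
    refine le_antisymm (sup_le inf_le_right fun p hp => (mem_stdSpan.1 hp).1) fun p hp => ?_
    obtain ⟨v, hv, hpv⟩ := hsup p hp
    rw [← sub_add_cancel p v]
    exact Submodule.add_mem_sup ⟨hpv, Submodule.sub_mem _ hp (mem_stdSpan.1 hv).1⟩ hv
  rw [← Submodule.finrank_sup_add_finrank_inf_eq, hinf, hs, finrank_bot, add_zero]

/-- The vanishing ideal `I` of the points of a Waring decomposition of the monomial
`x_0^{d_0} ⋯ x_n^{d_n}` has the same Hilbert function as the complete intersection
`J = (α_1^{d_1+1},…,α_n^{d_n+1})`. -/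
theorem hilbert_function_agrees (n : ℕ) (hn : 1 ≤ n)
    (d : Fin (n + 1) → ℕ) (hmono : Monotone d) (hpos : 0 < d 0)
    (r : ℕ) (hr : r = ∏ i ∈ Finset.univ.erase 0, (d i + 1))
    (ℓ : Fin r → (Fin (n + 1) → ℂ))
    (hdec : (∏ i, X i ^ d i : MvPolynomial (Fin (n + 1)) ℂ)
        = ∑ j, (∑ i, C (ℓ j i) * X i) ^ (∑ i, d i))
    (hmin : IsLeast {s : ℕ | ∃ m : Fin s → (Fin (n + 1) → ℂ),
        (∏ i, X i ^ d i : MvPolynomial (Fin (n + 1)) ℂ)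
          = ∑ j, (∑ i, C (m j i) * X i) ^ (∑ i, d i)} r)
    (I : Ideal (MvPolynomial (Fin (n + 1)) ℂ))
    (hI : ∀ p : MvPolynomial (Fin (n + 1)) ℂ,
      p ∈ I ↔ ∀ (j : Fin r) (c : ℂ), c ≠ 0 → eval (fun i => c * ℓ j i) p = 0) :
    ∀ t : ℕ, Module.finrank ℂ (idealGradedPiece I t)
      = Module.finrank ℂ (idealGradedPiece
          (Ideal.span (Set.range fun i : Fin n =>
            (X i.succ : MvPolynomial (Fin (n + 1)) ℂ) ^ (d i.succ + 1))) t) := by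
  intro t
  have hr' : r = ∏ i : Fin n, (d i.succ + 1) := by
    rw [hr, ← Finset.prod_image (s := Finset.univ) (g := Fin.succ) (f := fun i => d i + 1)
      (Fin.succ_injective n).injOn]
    congr 1
    ext i
    refine Fin.cases ?_ (fun i => ?_) i <;> simp
  have memI : ∀ p : MvPolynomial (Fin (n + 1)) ℂ, p.IsHomogeneous t →
      (p ∈ I ↔ ∀ j, eval (ℓ j) p = 0) := by
    intro p hp
    rw [hI]
    refine ⟨fun h j => by simpa using h j 1 one_ne_zero, fun h j c _ => ?_⟩
    rw [eval_const_mul_of_isHomogeneous hp, h j, mul_zero]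
  have hIdim := finrank_of_complement (t := t) (d := d) I
    (fun p hpI hp => stdSpan_eq_zero hpos hdec t p hp fun j _ =>
      (memI p (mem_stdSpan.1 hp).1).1 hpI j)
    (fun p hp => by
      obtain ⟨v, hv, h⟩ := exists_interpolant hpos hr' hdec t p hp
      exact ⟨v, hv, (memI _ (hp.sub (mem_stdSpan.1 hv).1)).2 h⟩)
  have hJdim := finrank_of_complement (t := t) (d := d)
    (Ideal.span (Set.range fun i : Fin n =>
      (X i.succ : MvPolynomial (Fin (n + 1)) ℂ) ^ (d i.succ + 1)))
    (fun p hpJ hp => by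
      ext m
      by_contra hm
      obtain ⟨i, hi⟩ := (mem_powers_ideal_iff d p).1 hpJ m hm
      exact absurd ((mem_stdSpan.1 hp).2 m hm i) (by omega))
    (fun p hp => by
      classical
      -- `v` keeps exactly the standard monomials of `p`.
      let v : MvPolynomial (Fin (n + 1)) ℂ :=
        ∑ m ∈ p.support with ∀ i : Fin n, m i.succ ≤ d i.succ, monomial m (coeff m p)
      have hv : ∀ m, coeff m v = if ∀ i : Fin n, m i.succ ≤ d i.succ then coeff m p else 0 := by
        intro m
        simp only [v, coeff_sum, coeff_monomial, Finset.sum_ite_eq', Finset.mem_filter,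
          mem_support_iff]
        grind
      refine ⟨v, mem_stdSpan.2 ⟨fun m hm => hp ?_, fun m hm => ?_⟩, ?_⟩
      · rw [hv] at hm
        exact fun h => hm (by simp [h])
      · rw [hv] at hm
        by_contra h
        exact hm (if_neg h)
      · rw [mem_powers_ideal_iff]
        intro m hm
        rw [coeff_sub, hv] at hm
        by_contra! h
        exact hm (by rw [if_pos h, sub_self]))
  omega
end

section
/- Let 0 < d_0 ≤ d_1 ≤ ⋯ ≤ d_n, S = ℂ[α_0,…,α_n], F^⊥ = (α_0^{d_0+1}, α_1^{d_1+1}, …, α_n^{d_n+1}) and J = (α_1^{d_1+1},…,α_n^{d_n+1}) as ideals of S. Then for every integer t, dim_ℂ((F^⊥)_t ∩ α_0·S_{t−1}) − dim_ℂ S_{t−d_0−1} = dim_ℂ J_{t−1} − dim_ℂ J_{t−d_0−1}, where subscripts denote homogeneous components of the given degree (and S_k = 0 for k < 0). -/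
/-!
Every space in the statement is spanned by monomials, so its dimension is the number of
multidegrees `m` it contains (`finrank_restrictSupport`). Write `P m` for `∃ i ≥ 1, d i + 1 ≤ m i`,
the condition that the monomial of multidegree `m` lies in `J`. This condition ignores the exponent
`m 0`, hence is unchanged under multiplication by powers of `α_0`.

The monomials of `(F^⊥)_t ∩ α_0 S_{t-1}` are those of degree `t` with `1 ≤ m 0` and
`d 0 + 1 ≤ m 0 ∨ P m`. Those with `d 0 + 1 ≤ m 0` are `α_0^{d_0+1}` times the monomials of
`S_{t-d_0-1}`; the others, divided by `α_0`, are the monomials of `J_{t-1}` with `m 0 < d 0`.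
Finally the monomials of `J_{t-1}` with `d 0 ≤ m 0` are `α_0^{d_0}` times those of
`J_{t-d_0-1}`. Comparing the counts gives the identity.
-/

open MvPolynomial

/-- The space `S_k` of homogeneous polynomials of degree `k` in `ℂ[α_0,…,α_n]`,
indexed by an integer `k` (with `S_k = 0` for `k < 0`). -/
noncomputable def homZ (n : ℕ) (k : ℤ) : Submodule ℂ (MvPolynomial (Fin (n + 1)) ℂ) :=
  if 0 ≤ k then homogeneousSubmodule (Fin (n + 1)) ℂ k.toNat else ⊥

/-- The degree-`k` homogeneous component of an ideal, for an integer `k`. -/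
noncomputable def idealZ {n : ℕ} (I : Ideal (MvPolynomial (Fin (n + 1)) ℂ)) (k : ℤ) :
    Submodule ℂ (MvPolynomial (Fin (n + 1)) ℂ) :=
  Submodule.restrictScalars ℂ I ⊓ homZ n k


theorem finrank_restrictSupport {n : ℕ} (s : Set (Fin (n + 1) →₀ ℕ)) :
    Module.finrank ℂ (restrictSupport ℂ s) = s.ncard :=
  Module.finrank_eq_nat_card_basis (basisRestrictSupport ℂ s)

theorem restrictSupport_inf {n : ℕ} (s t : Set (Fin (n + 1) →₀ ℕ)) :
    restrictSupport ℂ s ⊓ restrictSupport ℂ t = restrictSupport ℂ (s ∩ t) := by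
  ext p
  simp [mem_restrictSupport_iff]

theorem homZ_eq (n : ℕ) (k : ℤ) :
    homZ n k = restrictSupport ℂ {m : Fin (n + 1) →₀ ℕ | (m.degree : ℤ) = k} := by
  unfold homZ
  split_ifs with h
  · ext p
    rw [homogeneousSubmodule_eq_finsupp_supported]
    have : {m : Fin (n + 1) →₀ ℕ | m.degree = k.toNat} = {m | (m.degree : ℤ) = k} := by
      ext m
      simp only [Set.mem_ofPred_eq]
      omega
    rw [this]
    rfl
  · have : {m : Fin (n + 1) →₀ ℕ | (m.degree : ℤ) = k} = ∅ := by
      ext m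
      simp only [Set.mem_ofPred_eq, Set.mem_empty_iff_false, iff_false]
      omega
    rw [this, restrictSupport_eq_span]
    simp

/-- The ideal generated by the powers `α_{f i}^{e i + 1}` is a monomial ideal: a polynomial lies in
it iff each of its monomials is divisible by one of the generators. -/
theorem idealZ_span_pow {n : ℕ} {ι : Type*} (f : ι → Fin (n + 1)) (e : ι → ℕ) (k : ℤ) :
    idealZ (Ideal.span (Set.range fun i =>
      (X (f i) : MvPolynomial (Fin (n + 1)) ℂ) ^ (e i + 1))) k =
      restrictSupport ℂ {m | (∃ i, e i + 1 ≤ m (f i)) ∧ (m.degree : ℤ) = k} := by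
  have hr : (Set.range fun i => (X (f i) : MvPolynomial (Fin (n + 1)) ℂ) ^ (e i + 1)) =
      (fun s => monomial s (1 : ℂ)) '' Set.range fun i => Finsupp.single (f i) (e i + 1) := by
    rw [← Set.range_comp]
    congr 1
    funext i
    simp [X_pow_eq_monomial]
  have h : Submodule.restrictScalars ℂ (Ideal.span (Set.range fun i =>
      (X (f i) : MvPolynomial (Fin (n + 1)) ℂ) ^ (e i + 1))) =
      restrictSupport ℂ {m | ∃ i, e i + 1 ≤ m (f i)} := by
    ext p
    rw [hr, Submodule.restrictScalars_mem, mem_ideal_span_monomial_image, mem_restrictSupport_iff]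
    simp only [Set.exists_range_iff, Finsupp.single_le_iff]
    rfl
  rw [idealZ, h, homZ_eq, restrictSupport_inf]
  rfl

theorem map_X_zero_mul_restrictSupport {n : ℕ} (s : Set (Fin (n + 1) →₀ ℕ)) :
    (restrictSupport ℂ s).map (LinearMap.mulLeft ℂ (X 0)) =
      restrictSupport ℂ ((Finsupp.single 0 1 + ·) '' s) := by
  rw [restrictSupport_eq_span, restrictSupport_eq_span, Submodule.map_span, Set.image_image,
    Set.image_image]
  simp [X, monomial_mul]

theorem mem_image_single_zero_add {n : ℕ} {a : ℕ} {s : Set (Fin (n + 1) →₀ ℕ)}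
    {m : Fin (n + 1) →₀ ℕ} :
    m ∈ (Finsupp.single 0 a + ·) '' s ↔ a ≤ m 0 ∧ m - Finsupp.single 0 a ∈ s := by
  constructor
  · rintro ⟨m, hm, rfl⟩
    simpa using hm
  · rintro ⟨h, hm⟩
    exact ⟨_, hm, add_tsub_cancel_of_le (Finsupp.single_le_iff.2 h)⟩

theorem degree_tsub_single_zero {n : ℕ} {a : ℕ} {m : Fin (n + 1) →₀ ℕ} (h : a ≤ m 0) :
    (m - Finsupp.single 0 a).degree + a = m.degree := by
  conv_rhs => rw [← tsub_add_cancel_of_le (Finsupp.single_le_iff.2 h)]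
  simp

/-- If all multidegrees in `B` have `0`-th exponent at least `a`, and multiplication by `α_0^a`
identifies `A` with `B`, then `A` and `B` have equally many elements. -/
theorem ncard_eq_of_shift {n : ℕ} (a : ℕ) {A B : Set (Fin (n + 1) →₀ ℕ)}
    (hB : ∀ m ∈ B, a ≤ m 0) (h : ∀ m, Finsupp.single 0 a + m ∈ B ↔ m ∈ A) :
    B.ncard = A.ncard := by
  have : B = (Finsupp.single 0 a + ·) '' A := by
    ext m
    rw [mem_image_single_zero_add, ← h]
    constructor
    · intro hm
      exact ⟨hB m hm, by rwa [add_tsub_cancel_of_le (Finsupp.single_le_iff.2 (hB m hm))]⟩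
    · rintro ⟨h0, hm⟩
      rwa [add_tsub_cancel_of_le (Finsupp.single_le_iff.2 h0)] at hm
  rw [this, Set.ncard_image_of_injective _ (add_right_injective _)]

/-- With `F^⊥ = (α_0^{d_0+1},…,α_n^{d_n+1})` and `J = (α_1^{d_1+1},…,α_n^{d_n+1})`,
for every integer `t`:
`dim((F^⊥)_t ∩ α_0·S_{t−1}) − dim S_{t−d_0−1} = dim J_{t−1} − dim J_{t−d_0−1}`. -/
theorem dimension_difference (n : ℕ) (hn : 1 ≤ n)
    (d : Fin (n + 1) → ℕ) (hmono : Monotone d) (hpos : 0 < d 0) :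
    ∀ t : ℤ,
      (Module.finrank ℂ
          ↥(idealZ (Ideal.span (Set.range fun i : Fin (n + 1) =>
              (X i : MvPolynomial (Fin (n + 1)) ℂ) ^ (d i + 1))) t
            ⊓ (homZ n (t - 1)).map (LinearMap.mulLeft ℂ (X 0))) : ℤ)
        - Module.finrank ℂ (homZ n (t - (d 0 : ℤ) - 1))
      = (Module.finrank ℂ
          (idealZ (Ideal.span (Set.range fun i : Fin n =>
              (X i.succ : MvPolynomial (Fin (n + 1)) ℂ) ^ (d i.succ + 1))) (t - 1)) : ℤ)
        - Module.finrank ℂ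
          (idealZ (Ideal.span (Set.range fun i : Fin n =>
              (X i.succ : MvPolynomial (Fin (n + 1)) ℂ) ^ (d i.succ + 1)))
            (t - (d 0 : ℤ) - 1)) := by
  intro t
  have hZ := homZ_eq n
  have hF := idealZ_span_pow (n := n) id d
  have hJ := idealZ_span_pow (n := n) Fin.succ (fun i : Fin n => d i.succ)
  simp only [id] at hF
  rw [hF, hJ, hJ, hZ (t - 1), map_X_zero_mul_restrictSupport, restrictSupport_inf, hZ]
  simp only [finrank_restrictSupport]
  set P : (Fin (n + 1) →₀ ℕ) → Prop := fun m => ∃ i : Fin n, d i.succ + 1 ≤ m i.succ with hP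
  have hPshift : ∀ a m, P (Finsupp.single 0 a + m) ↔ P m := by
    intro a m
    simp [hP]
  have hL : {m : Fin (n + 1) →₀ ℕ | (∃ i, d i + 1 ≤ m i) ∧ (m.degree : ℤ) = t} ∩
      (Finsupp.single 0 1 + ·) '' {m : Fin (n + 1) →₀ ℕ | (m.degree : ℤ) = t - 1} =
      {m | (m.degree : ℤ) = t ∧ 1 ≤ m 0 ∧ (d 0 + 1 ≤ m 0 ∨ P m)} := by
    ext m
    simp only [mem_image_single_zero_add, Set.mem_inter_iff, Set.mem_ofPred_eq, Fin.exists_fin_succ]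
    constructor
    · rintro ⟨⟨h, h1⟩, h2, -⟩
      exact ⟨h1, h2, h⟩
    · rintro ⟨h1, h2, h⟩
      refine ⟨⟨h, h1⟩, h2, ?_⟩
      have := degree_tsub_single_zero h2
      omega
  rw [hL]
  have hfin : ∀ k : ℤ, {m : Fin (n + 1) →₀ ℕ | (m.degree : ℤ) = k}.Finite := fun k =>
    (Finsupp.finite_of_degree_eq k.toNat).subset fun m hm => by
      simp only [Set.mem_ofPred_eq] at hm ⊢
      omega
  set L : Set (Fin (n + 1) →₀ ℕ) :=
    {m | (m.degree : ℤ) = t ∧ 1 ≤ m 0 ∧ (d 0 + 1 ≤ m 0 ∨ P m)} with hLdef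
  set J₁ : Set (Fin (n + 1) →₀ ℕ) := {m | P m ∧ (m.degree : ℤ) = t - 1} with hJ₁
  have splitL := Set.ncard_inter_add_ncard_sdiff_eq_ncard L {m | d 0 + 1 ≤ m 0}
    ((hfin t).subset fun m hm => hm.1)
  have splitJ := Set.ncard_inter_add_ncard_sdiff_eq_ncard J₁ {m | d 0 ≤ m 0}
    ((hfin (t - 1)).subset fun m hm => hm.2)
  have e₁ : (L ∩ {m | d 0 + 1 ≤ m 0}).ncard =
      {m : Fin (n + 1) →₀ ℕ | (m.degree : ℤ) = t - d 0 - 1}.ncard := by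
    refine ncard_eq_of_shift (d 0 + 1) (fun m hm => hm.2) fun m => ?_
    simp [hLdef]
    omega
  have e₂ : (J₁ ∩ {m | d 0 ≤ m 0}).ncard =
      {m : Fin (n + 1) →₀ ℕ | (∃ i : Fin n, d i.succ + 1 ≤ m i.succ) ∧
        (m.degree : ℤ) = t - d 0 - 1}.ncard := by
    refine ncard_eq_of_shift (d 0) (fun m hm => hm.2) fun m => ?_
    change _ ↔ P m ∧ (m.degree : ℤ) = t - d 0 - 1
    simp [hJ₁, hPshift]
    intro _
    omega
  have e₃ : (L \ {m | d 0 + 1 ≤ m 0}).ncard = (J₁ \ {m | d 0 ≤ m 0}).ncard := by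
    refine ncard_eq_of_shift 1 (fun m hm => hm.1.2.1) fun m => ?_
    by_cases h : P m <;> simp [hLdef, hJ₁, hPshift, h] <;> omega
  omega
end

section
/- Let F = x_0^{d_0} ⋯ x_n^{d_n} with 0 < d_0 ≤ ⋯ ≤ d_n, d = Σ d_i, let F = ℓ_1^d + ⋯ + ℓ_r^d be a Waring decomposition (r = R(F) = (d_1+1)⋯(d_n+1)), and let I ⊂ ℂ[α_0,…,α_n] be the homogeneous vanishing ideal of {[ℓ_1],…,[ℓ_r]} ⊂ ℙ^n. Then the ideal quotient I : α_0 equals I. -/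
/-!
Geometrically, `I : α₀` is the vanishing ideal of those points `[ℓ_j]` that do not lie on the
hyperplane `α₀ = 0`, so it suffices to show that no point lies on it (`coord_zero_ne_zero`).

Comparing coefficients in the decomposition gives the moments of the points
(`sum_prod_pow_eq_zero`, `sum_prod_pow_ne_zero`): for an exponent `m` of total degree `∑ i, d i`,
the sum `∑ j, ∏ i, ℓ_j(i) ^ m i` vanishes exactly when `m ≠ d`. This is apolarity: a form of
degree `∑ i, d i` vanishing at all the points has no `α ^ d` term.

Let `J` be the set of points off the hyperplane, in the affine chart `y_i = ℓ(i) / ℓ(0)`. The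
monomials `y ^ a` with `a_i ≤ d_i` for `i ≥ 1` are linearly independent as functions on `J`
(`linearIndependent_chart`). Indeed, suppose `g = ∑ c_a y ^ a` vanishes on `J`, and let `b` be of
maximal degree `e` with `c_b ≠ 0`. Let `G` be the homogenization of `g` to degree `e` by `α₀`.
Since `d 0 > 0`, the form `α₀ ^ d 0 * ∏_{i ≥ 1} α_i ^ (d_i - b_i) * G` vanishes at every point,
on or off the hyperplane; it has degree `∑ i, d i`, and its coefficient at `α ^ d` is `c_b ≠ 0`,
a contradiction. Hence `J` has at least `∏_{i ≥ 1} (d_i + 1) = r` elements, so it contains all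
the points.
-/

open MvPolynomial

lemma coeff_linear_pow {k : ℕ} (l : Fin k → ℂ) (D : ℕ) (m : Fin k →₀ ℕ) (hm : ∑ i, m i = D) :
    coeff m ((∑ i, C (l i) * X i : MvPolynomial (Fin k) ℂ) ^ D)
      = Nat.multinomial Finset.univ m * ∏ i, l i ^ m i := by
  have key : ∀ f : Fin k → ℕ, ((Nat.multinomial Finset.univ f : ℕ) : MvPolynomial (Fin k) ℂ) *
      ∏ i, (C (l i) * X i : MvPolynomial (Fin k) ℂ) ^ f i
      = monomial (Finsupp.equivFunOnFinite.symm f)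
          (Nat.multinomial Finset.univ f * ∏ i, l i ^ f i) := by
    intro f
    rw [monomial_eq, Finsupp.prod_fintype _ _ (by simp)]
    simp [mul_pow, Finset.prod_mul_distrib, mul_assoc]
  rw [Finset.sum_pow_eq_sum_piAntidiag, coeff_sum, Finset.sum_eq_single (m : Fin k → ℕ)]
  · rw [key, coeff_monomial, if_pos (by ext; simp)]
  · intro f _ hf
    rw [key, coeff_monomial, if_neg]
    rintro rfl
    exact hf (by ext; simp)
  · intro h
    exact absurd (Finset.mem_piAntidiag.2 ⟨hm, by simp⟩) h

/-- The coefficients of `x ^ m` on the two sides of the decomposition agree. -/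
lemma multinomial_mul_moment {k r : ℕ} {d : Fin k → ℕ} {ℓ : Fin r → Fin k → ℂ}
    (hdec : (∏ i, X i ^ d i : MvPolynomial (Fin k) ℂ)
        = ∑ j, (∑ i, C (ℓ j i) * X i) ^ (∑ i, d i))
    (m : Fin k → ℕ) (hm : ∑ i, m i = ∑ i, d i) :
    (Nat.multinomial Finset.univ m : ℂ) * ∑ j, ∏ i, ℓ j i ^ m i = if d = m then 1 else 0 := by
  have h := congrArg (coeff (Finsupp.equivFunOnFinite.symm m)) hdec
  rw [coeff_sum, Finset.sum_congr rfl fun j _ =>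
    coeff_linear_pow (ℓ j) _ (Finsupp.equivFunOnFinite.symm m) (by simpa using hm)] at h
  have hF : (∏ i, X i ^ d i : MvPolynomial (Fin k) ℂ)
      = monomial (Finsupp.equivFunOnFinite.symm d) 1 := by
    rw [monomial_eq, Finsupp.prod_fintype _ _ (by simp)]
    simp
  rw [hF, coeff_monomial] at h
  simp only [EmbeddingLike.apply_eq_iff_eq, Finsupp.equivFunOnFinite_symm_apply_apply] at h
  rw [Finset.mul_sum, h]
  rfl

lemma sum_prod_pow_eq_zero {k r : ℕ} {d : Fin k → ℕ} {ℓ : Fin r → Fin k → ℂ}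
    (hdec : (∏ i, X i ^ d i : MvPolynomial (Fin k) ℂ)
        = ∑ j, (∑ i, C (ℓ j i) * X i) ^ (∑ i, d i))
    (m : Fin k → ℕ) (hm : ∑ i, m i = ∑ i, d i) (hne : d ≠ m) :
    ∑ j, ∏ i, ℓ j i ^ m i = 0 := by
  have h := multinomial_mul_moment hdec m hm
  rw [if_neg hne] at h
  exact (mul_eq_zero.1 h).resolve_left (by exact_mod_cast (Nat.multinomial_pos _ _).ne')

lemma sum_prod_pow_ne_zero {k r : ℕ} {d : Fin k → ℕ} {ℓ : Fin r → Fin k → ℂ}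
    (hdec : (∏ i, X i ^ d i : MvPolynomial (Fin k) ℂ)
        = ∑ j, (∑ i, C (ℓ j i) * X i) ^ (∑ i, d i)) :
    ∑ j, ∏ i, ℓ j i ^ d i ≠ 0 := by
  intro h0
  have h := multinomial_mul_moment hdec d rfl
  simp [h0] at h

/-- The box monomials `y ^ a`, `a_i ≤ d_i`, restricted to the points off the hyperplane
`α₀ = 0` in the chart `y_i = ℓ(i) / ℓ(0)`, are linearly independent functions. -/
lemma linearIndependent_chart {n r : ℕ} {d : Fin (n + 1) → ℕ} (hpos : 0 < d 0)
    {ℓ : Fin r → Fin (n + 1) → ℂ}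
    (hdec : (∏ i, X i ^ d i : MvPolynomial (Fin (n + 1)) ℂ)
        = ∑ j, (∑ i, C (ℓ j i) * X i) ^ (∑ i, d i)) :
    LinearIndependent ℂ (fun (a : (i : Fin n) → Fin (d i.succ + 1))
      (j : {j : Fin r // ℓ j 0 ≠ 0}) => ∏ i, (ℓ j i.succ / ℓ j 0) ^ (a i : ℕ)) := by
  rw [Fintype.linearIndependent_iff]
  intro g hg
  by_contra! hne
  obtain ⟨a₀, ha₀⟩ := hne
  obtain ⟨b, hb, hmax⟩ := Finset.exists_max_image (Finset.univ.filter fun a => g a ≠ 0)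
    (fun a => ∑ i, (a i : ℕ)) ⟨a₀, by simpa using ha₀⟩
  simp only [Finset.mem_filter, Finset.mem_univ, true_and] at hb hmax
  -- The exponents of `α₀ ^ d 0 * ∏ α_i ^ (d_i - b_i)` times the homogenization of `y ^ a`;
  -- the truncated subtraction in the first entry is genuine whenever `g a ≠ 0`.
  let m : ((i : Fin n) → Fin (d i.succ + 1)) → Fin (n + 1) → ℕ := fun a =>
    Fin.cons ((∑ i, (b i : ℕ)) - (∑ i, (a i : ℕ)) + d 0)
      (fun i => (a i : ℕ) + (d i.succ - (b i : ℕ)))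
  have hble : ∀ i, (b i : ℕ) ≤ d i.succ := fun i => Nat.lt_succ_iff.1 (b i).2
  have hmsum : ∀ a, g a ≠ 0 → ∑ i, m a i = ∑ i, d i := by
    intro a ha
    have h1 := hmax a ha
    have h2 : ∑ i : Fin n, (d i.succ - (b i : ℕ)) + ∑ i, (b i : ℕ) = ∑ i : Fin n, d i.succ := by
      rw [← Finset.sum_add_distrib]
      exact Finset.sum_congr rfl fun i _ => Nat.sub_add_cancel (hble i)
    simp only [m, Fin.sum_univ_succ, Fin.cons_zero, Fin.cons_succ, Finset.sum_add_distrib]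
    omega
  have hmb : m b = d := by
    funext i
    refine Fin.cases ?_ (fun i => ?_) i
    · simp [m]
    · simp only [m, Fin.cons_succ]
      have := hble i
      omega
  have hmne : ∀ a, a ≠ b → d ≠ m a := by
    intro a hab h
    apply hab
    funext i
    have h1 := congrFun h i.succ
    simp only [m, Fin.cons_succ] at h1
    have := hble i
    ext
    omega
  have hvanish : ∀ j, ∑ a, g a * ∏ i, ℓ j i ^ m a i = 0 := by
    intro j
    by_cases hj : ℓ j 0 = 0
    · refine Finset.sum_eq_zero fun a _ => ?_
      rw [Fin.prod_univ_succ, hj]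
      simp only [m, Fin.cons_zero]
      rw [zero_pow (by omega)]
      simp
    · have h := congrFun hg ⟨j, hj⟩
      simp only [Finset.sum_apply, Pi.smul_apply, smul_eq_mul, Pi.zero_apply] at h
      have h' := congrArg (fun z => (ℓ j 0 ^ ((∑ i, (b i : ℕ)) + d 0) *
        ∏ i : Fin n, ℓ j i.succ ^ (d i.succ - (b i : ℕ))) * z) h
      simp only [mul_zero, Finset.mul_sum] at h'
      rw [← h']
      refine Finset.sum_congr rfl fun a _ => ?_
      by_cases ha : g a = 0
      · simp [ha]
      have h1 := hmax a ha
      have hp : ℓ j 0 ^ ((∑ i, (b i : ℕ)) + d 0)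
          = ℓ j 0 ^ ((∑ i, (b i : ℕ)) - (∑ i, (a i : ℕ)) + d 0) * ℓ j 0 ^ (∑ i, (a i : ℕ)) := by
        rw [← pow_add]
        congr 1
        omega
      rw [Fin.prod_univ_succ]
      simp only [m, Fin.cons_zero, Fin.cons_succ, pow_add _ ((a _ : ℕ)),
        Finset.prod_mul_distrib, div_pow, Finset.prod_div_distrib, Finset.prod_pow_eq_pow_sum]
      rw [hp]
      field_simp
  have htotal : ∑ a, g a * ∑ j, ∏ i, ℓ j i ^ m a i = 0 := by
    simp only [Finset.mul_sum]
    rw [Finset.sum_comm]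
    exact Finset.sum_eq_zero fun j _ => hvanish j
  rw [Finset.sum_eq_single b, hmb] at htotal
  · exact mul_ne_zero hb (sum_prod_pow_ne_zero hdec) htotal
  · intro a _ hab
    by_cases ha : g a = 0
    · simp [ha]
    rw [sum_prod_pow_eq_zero hdec (m a) (hmsum a ha) (hmne a hab), mul_zero]
  · simp

/-- No point lies on `α₀ = 0`: there are `∏_{i ≥ 1} (d_i + 1) = r` independent functions on the
points off this hyperplane, and only `r` points in total. -/
lemma coord_zero_ne_zero {n r : ℕ} {d : Fin (n + 1) → ℕ} (hpos : 0 < d 0)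
    (hr : r = ∏ i ∈ Finset.univ.erase 0, (d i + 1)) {ℓ : Fin r → Fin (n + 1) → ℂ}
    (hdec : (∏ i, X i ^ d i : MvPolynomial (Fin (n + 1)) ℂ)
        = ∑ j, (∑ i, C (ℓ j i) * X i) ^ (∑ i, d i)) (j : Fin r) :
    ℓ j 0 ≠ 0 := by
  classical
  have hcard := (linearIndependent_chart hpos hdec).fintype_card_le_finrank
  have hprod : ∏ i ∈ Finset.univ.erase 0, (d i + 1) = ∏ i : Fin n, (d i.succ + 1) := by
    have h := Finset.mul_prod_erase Finset.univ (fun i => d i + 1) (Finset.mem_univ 0)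
    rw [Fin.prod_univ_succ] at h
    exact Nat.eq_of_mul_eq_mul_left (Nat.succ_pos _) h
  rw [Module.finrank_fintype_fun_eq_card, Fintype.card_pi] at hcard
  simp only [Fintype.card_fin] at hcard
  rw [← hprod, ← hr] at hcard
  by_contra hj
  have hlt := Fintype.card_subtype_lt (p := fun j => ℓ j 0 ≠ 0) (x := j) (by simpa using hj)
  rw [Fintype.card_fin] at hlt
  omega

/-- For the vanishing ideal `I` of the points of a Waring decomposition of the monomial
`x_0^{d_0} ⋯ x_n^{d_n}` (with `0 < d_0 ≤ ⋯ ≤ d_n`), the ideal quotient `I : α_0`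
equals `I`. -/
theorem colon_alpha0_eq_self (n : ℕ) (hn : 1 ≤ n)
    (d : Fin (n + 1) → ℕ) (hmono : Monotone d) (hpos : 0 < d 0)
    (r : ℕ) (hr : r = ∏ i ∈ Finset.univ.erase 0, (d i + 1))
    (ℓ : Fin r → (Fin (n + 1) → ℂ))
    (hdec : (∏ i, X i ^ d i : MvPolynomial (Fin (n + 1)) ℂ)
        = ∑ j, (∑ i, C (ℓ j i) * X i) ^ (∑ i, d i))
    (hmin : IsLeast {s : ℕ | ∃ m : Fin s → (Fin (n + 1) → ℂ),
        (∏ i, X i ^ d i : MvPolynomial (Fin (n + 1)) ℂ)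
          = ∑ j, (∑ i, C (m j i) * X i) ^ (∑ i, d i)} r)
    (I : Ideal (MvPolynomial (Fin (n + 1)) ℂ))
    (hI : ∀ p : MvPolynomial (Fin (n + 1)) ℂ,
      p ∈ I ↔ ∀ (j : Fin r) (c : ℂ), c ≠ 0 → eval (fun i => c * ℓ j i) p = 0) :
    Submodule.colon I (Ideal.span {(X 0 : MvPolynomial (Fin (n + 1)) ℂ)}) = I := by
  have h0 := coord_zero_ne_zero hpos hr hdec
  ext p
  rw [Submodule.mem_colon]
  constructor
  · intro h
    have hp := (hI _).1 (h (X 0) (Ideal.subset_span rfl))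
    rw [hI]
    intro j c hc
    have := hp j c hc
    simpa [hc, h0 j] using this
  · intro hp q _
    exact I.mul_mem_right q hp
end
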